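/- arXiv:2002.04346 — 5 statements merged into one kernel-verified Lean document; each statement's English description precedes it below -/
import Mathlib

section
/- Let b(z) = b₀ + b₁z + ⋯ + b_q z^q be an n×n real polynomial matrix with det b(z) ≠ 0 for all complex z with |z| = 1, and suppose b admits a Wiener–Hopf factorisation whose partial indices are all equal to a single integer κ with 0 ≤ κ ≤ q, i.e. s(z) = z^κ I_n. Then there exists exactly one pair (p(z), f(z)) such that b(z) = p(z) · z^κ I_n · f(z) is a Wiener–Hopf factorisation and p(0) = I_n; moreover, in this unique representative, p(z) = I_n + p₁z + ⋯ + p_{q−κ} z^{q−κ} has degree at most q−κ and f(z) = f₀ + f₁z⁻¹ + ⋯ + f_κ z^{−κ}, i.e. f(z) = F(1/z) for a polynomial matrix F of degree at most κ. -/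
open Polynomial Matrix

/-- Evaluation of a real polynomial matrix at a complex point (entrywise). -/
noncomputable def evalMat {n : ℕ} (M : Matrix (Fin n) (Fin n) (Polynomial ℝ)) (z : ℂ) :
    Matrix (Fin n) (Fin n) ℂ :=
  M.map (fun r => Polynomial.aeval z r)

/-- A polynomial matrix viewed as a matrix over the field of real rational functions. -/
noncomputable def polyToRat {n : ℕ} (M : Matrix (Fin n) (Fin n) (Polynomial ℝ)) :
    Matrix (Fin n) (Fin n) (RatFunc ℝ) :=
  M.map (algebraMap (Polynomial ℝ) (RatFunc ℝ))

/-- The rational matrix F(1/z) obtained from a polynomial matrix F by substituting 1/z. -/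
noncomputable def invSub {n : ℕ} (F : Matrix (Fin n) (Fin n) (Polynomial ℝ)) :
    Matrix (Fin n) (Fin n) (RatFunc ℝ) :=
  F.map (fun r => Polynomial.aeval ((RatFunc.X : RatFunc ℝ)⁻¹) r)

/-- The diagonal matrix diag(z^{κ₁},…,z^{κₙ}) over ℝ(z). -/
noncomputable def sMat (n : ℕ) (κ : Fin n → ℤ) : Matrix (Fin n) (Fin n) (RatFunc ℝ) :=
  Matrix.diagonal (fun i => (RatFunc.X : RatFunc ℝ) ^ (κ i))

/-- `IsWHF b p F κ` : b(z) = p(z) · diag(z^{κᵢ}) · F(1/z) is a Wiener–Hopf factorisation. -/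
structure IsWHF {n : ℕ} (b p F : Matrix (Fin n) (Fin n) (Polynomial ℝ))
    (κ : Fin n → ℤ) : Prop where
  p_noZero : ∀ z : ℂ, ‖z‖ ≤ 1 → (evalMat p z).det ≠ 0
  F_noZero : ∀ w : ℂ, ‖w‖ ≤ 1 → (evalMat F w).det ≠ 0
  anti : ∀ i j : Fin n, i ≤ j → κ j ≤ κ i
  eq : polyToRat b = polyToRat p * sMat n κ * invSub F

/-- Partial indices of type (κ,k): the first k indices equal κ+1, the rest κ. -/
def idx (n : ℕ) (κ k : ℕ) : Fin n → ℤ := fun i => if (i : ℕ) < k then (κ : ℤ) + 1 else (κ : ℤ)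

/-!
Two factorisations with the same single index `κ` satisfy `p(z) f(z) = p'(z) f'(z)`, so
`p'(z)⁻¹ p(z) = f'(z) f(z)⁻¹` is regular on the closed unit disc and, by the right-hand side, for
`|z| ≥ 1` including infinity. By Liouville it is a constant matrix, and `p(0) = p'(0) = I` forces
it to be `I`. The degree bounds have the same flavour: `p(z) = z^{-κ} b(z) f(z)⁻¹` has a pole of
order at most `q - κ` at infinity, where `f` is invertible, and `f(z) = z^{-κ} p(z)⁻¹ b(z)` has a
pole of order at most `κ` at zero, where `p` is invertible.

Liouville is used in an algebraic form: if `a(z) / u(z) = c(1/z) / v(1/z)` with `u` and `v` free of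
zeros in the closed disc, then `u` and `z^K v(1/z)` are coprime, so `u` divides `a`, and comparing
degrees shows that the quotient is constant.
-/

section Reflection

variable {R A : Type*} [CommRing R] [CommRing A] [Algebra R A] {x y : A}

lemma aeval_reflect_of_mul_eq_one (hxy : x * y = 1) {f : R[X]} {K : ℕ} (hf : f.natDegree ≤ K) :
    aeval x (f.reflect K) = x ^ K * aeval y f := by
  let _ : Invertible y := ⟨x, hxy, mul_comm y x ▸ hxy⟩
  have h : aeval x (f.reflect K) * y ^ K = aeval y f :=
    eval₂_reflect_mul_pow (algebraMap R A) y K f hf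
  rw [← h, mul_left_comm, ← mul_pow, hxy, one_pow, mul_one]

lemma natDegree_reflect_of_coeff_zero_ne_zero {f : R[X]} {K : ℕ} (hf : f.natDegree ≤ K)
    (h0 : f.coeff 0 ≠ 0) : (f.reflect K).natDegree = K := by
  refine natDegree_eq_of_le_of_coeff_ne_zero
    (natDegree_reflect_le.trans (max_eq_left hf).le) ?_
  rwa [coeff_reflect, revAt_le le_rfl, Nat.sub_self]

lemma mul_reflect_eq_of_aeval_mul_aeval_eq (hx : Transcendental R x) (hxy : x * y = 1)
    {a v u c : R[X]} {K : ℕ} (hv : v.natDegree ≤ K) (hc : c.natDegree ≤ K)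
    (h : aeval x a * aeval y v = aeval x u * aeval y c) :
    a * v.reflect K = u * c.reflect K := by
  apply transcendental_iff_injective.mp hx
  rw [map_mul, map_mul, aeval_reflect_of_mul_eq_one hxy hv, aeval_reflect_of_mul_eq_one hxy hc]
  linear_combination x ^ K * h

variable [NoZeroDivisors R]

lemma natDegree_le_of_mul_reflect_eq {a v c : R[X]} {K m : ℕ} (hv : v.natDegree ≤ K)
    (hc : c.natDegree ≤ K) (hv0 : v.coeff 0 ≠ 0)
    (h : a * v.reflect K = X ^ m * c.reflect K) : a.natDegree ≤ m := by
  rcases eq_or_ne a 0 with rfl | ha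
  · exact natDegree_zero.trans_le m.zero_le
  have hvne : v ≠ 0 := fun hv_eq => hv0 (by rw [hv_eq, coeff_zero])
  have hdeg : a.natDegree + K ≤ m + K := calc
    a.natDegree + K = (a * v.reflect K).natDegree := by
      rw [natDegree_mul ha (reflect_eq_zero_iff.not.mpr hvne),
        natDegree_reflect_of_coeff_zero_ne_zero hv hv0]
    _ = (X ^ m * c.reflect K).natDegree := by rw [h]
    _ ≤ m + K := natDegree_mul_le_of_le (natDegree_X_pow_le m)
      (natDegree_reflect_le.trans (max_eq_left hc).le)
  exact Nat.add_le_add_iff_right.mp hdeg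

lemma natDegree_le_of_aeval_mul_aeval_eq (hx : Transcendental R x) (hxy : x * y = 1)
    {a v c : R[X]} {m : ℕ} (hv0 : v.coeff 0 ≠ 0)
    (h : aeval x a * aeval y v = x ^ m * aeval y c) : a.natDegree ≤ m := by
  have hv : v.natDegree ≤ max v.natDegree c.natDegree := le_max_left _ _
  have hc : c.natDegree ≤ max v.natDegree c.natDegree := le_max_right _ _
  refine natDegree_le_of_mul_reflect_eq hv hc hv0 ?_
  apply mul_reflect_eq_of_aeval_mul_aeval_eq hx hxy hv hc
  rwa [map_pow, aeval_X]

end Reflection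

section ZeroFree

/-- A real polynomial without complex zeros in the closed unit disc. The determinants of both
factors of a Wiener–Hopf factorisation are of this kind, that of the right-hand factor as a
polynomial in `1/z`. -/
def ZeroFreeOnClosedDisc (u : ℝ[X]) : Prop := ∀ z : ℂ, ‖z‖ ≤ 1 → aeval z u ≠ 0

variable {u v : ℝ[X]}

lemma ZeroFreeOnClosedDisc.coeff_zero_ne_zero (hu : ZeroFreeOnClosedDisc u) : u.coeff 0 ≠ 0 := by
  have h := hu 0 (norm_zero.trans_le zero_le_one)
  rw [← coeff_zero_eq_aeval_zero'] at h
  exact fun h0 => h (by rw [h0, map_zero])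

lemma ZeroFreeOnClosedDisc.ne_zero (hu : ZeroFreeOnClosedDisc u) : u ≠ 0 :=
  fun h0 => hu.coeff_zero_ne_zero (by rw [h0, coeff_zero])

lemma ZeroFreeOnClosedDisc.isCoprime_reflect (hu : ZeroFreeOnClosedDisc u)
    (hv : ZeroFreeOnClosedDisc v) {K : ℕ} (hK : v.natDegree ≤ K) :
    IsCoprime u (v.reflect K) := by
  rw [isCoprime_iff_aeval_ne_zero_of_isAlgClosed ℝ ℂ]
  intro z
  rcases le_total ‖z‖ 1 with hz | hz
  · exact Or.inl (hu z hz)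
  · have hz0 : z ≠ 0 := norm_pos_iff.mp (one_pos.trans_le hz)
    refine Or.inr ?_
    rw [aeval_reflect_of_mul_eq_one (mul_inv_cancel₀ hz0) hK]
    refine mul_ne_zero (pow_ne_zero K hz0) (hv z⁻¹ ?_)
    rw [norm_inv]
    exact inv_le_one_of_one_le₀ hz

variable {A : Type*} [CommRing A] [Algebra ℝ A] {x y : A}

lemma exists_eq_mul_C_of_aeval_mul_aeval_eq (hx : Transcendental ℝ x) (hxy : x * y = 1)
    (hu : ZeroFreeOnClosedDisc u) (hv : ZeroFreeOnClosedDisc v) {a c : ℝ[X]}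
    (h : aeval x a * aeval y v = aeval x u * aeval y c) : ∃ r : ℝ, a = u * C r := by
  set K := max v.natDegree c.natDegree
  have hvK : v.natDegree ≤ K := le_max_left _ _
  have hcK : c.natDegree ≤ K := le_max_right _ _
  have hpoly : a * v.reflect K = u * c.reflect K :=
    mul_reflect_eq_of_aeval_mul_aeval_eq hx hxy hvK hcK h
  obtain ⟨e, rfl⟩ : u ∣ a :=
    (hu.isCoprime_reflect hv hvK).dvd_of_dvd_mul_right ⟨c.reflect K, hpoly⟩
  have he : e * v.reflect K = X ^ 0 * c.reflect K := by
    rw [pow_zero, one_mul]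
    exact mul_left_cancel₀ hu.ne_zero ((mul_assoc u e _).symm.trans hpoly)
  have hdeg : e.natDegree ≤ 0 :=
    natDegree_le_of_mul_reflect_eq hvK hcK hv.coeff_zero_ne_zero he
  exact ⟨e.coeff 0, by rw [← eq_C_of_natDegree_le_zero hdeg]⟩

end ZeroFree

section PolynomialMatrix

variable {ι R A : Type*} [Fintype ι] [DecidableEq ι] [CommRing R] [CommRing A] [Algebra R A]
  {x y : A}

lemma apply_mul_det_eq_of_mul_eq {P V M : Matrix ι ι A} (h : P * V = M) (i j : ι) :
    P i j * V.det = (M * V.adjugate) i j := by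
  rw [← h, Matrix.mul_assoc, Matrix.mul_adjugate, Matrix.mul_smul, Matrix.mul_one,
    Matrix.smul_apply, smul_eq_mul, mul_comm]

lemma natDegree_le_of_mapMatrix_mul_eq [NoZeroDivisors R] (hx : Transcendental R x)
    (hxy : x * y = 1) {P V Q : Matrix ι ι R[X]} {m : ℕ} (hV : V.det.coeff 0 ≠ 0)
    (h : (aeval x).mapMatrix P * (aeval y).mapMatrix V = x ^ m • (aeval y).mapMatrix Q)
    (i j : ι) : (P i j).natDegree ≤ m := by
  refine natDegree_le_of_aeval_mul_aeval_eq hx hxy (c := (Q * V.adjugate) i j) hV ?_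
  have hij := apply_mul_det_eq_of_mul_eq h i j
  rw [Matrix.smul_mul, ← AlgHom.map_det, ← AlgHom.map_adjugate, ← map_mul] at hij
  exact hij

lemma mapMatrix_aeval_map_reflect (hxy : x * y = 1) {M : Matrix ι ι R[X]} {K : ℕ}
    (hM : ∀ i j, (M i j).natDegree ≤ K) :
    (aeval x).mapMatrix (M.map (reflect K)) = x ^ K • (aeval y).mapMatrix M := by
  ext1 i j
  exact aeval_reflect_of_mul_eq_one hxy (hM i j)

lemma mapMatrix_aeval_map_C (x : A) (T : Matrix ι ι R) :
    (aeval x).mapMatrix (C.mapMatrix T) = (algebraMap R A).mapMatrix T := by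
  ext1 i j
  exact aeval_C x (T i j)

lemma map_coeff_zero_mul_map_C (M : Matrix ι ι R[X]) (T : Matrix ι ι R) :
    (M * C.mapMatrix T).map (fun r => r.coeff 0) = M.map (fun r => r.coeff 0) * T := by
  have hT : (constantCoeff (R := R)).mapMatrix (C.mapMatrix T) = T := by
    ext1 i j
    exact coeff_C_zero
  calc (M * C.mapMatrix T).map (fun r => r.coeff 0)
      = constantCoeff.mapMatrix M * constantCoeff.mapMatrix (C.mapMatrix T) :=
        map_mul constantCoeff.mapMatrix M (C.mapMatrix T)
    _ = M.map (fun r => r.coeff 0) * T := by rw [hT]; rfl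

lemma exists_eq_mul_map_C_of_mapMatrix_mul_eq [Algebra ℝ A]
    (hx : Transcendental ℝ x) (hxy : x * y = 1) {P V P' V' : Matrix ι ι ℝ[X]}
    (hP' : ZeroFreeOnClosedDisc P'.det) (hV : ZeroFreeOnClosedDisc V.det)
    (h : (aeval x).mapMatrix P * (aeval y).mapMatrix V =
      (aeval x).mapMatrix P' * (aeval y).mapMatrix V') :
    ∃ T : Matrix ι ι ℝ, P = P' * C.mapMatrix T := by
  have hadj : (aeval x).mapMatrix (P'.adjugate * P) * (aeval y).mapMatrix V =
      aeval x P'.det • (aeval y).mapMatrix V' := by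
    rw [map_mul, Matrix.mul_assoc, h, ← Matrix.mul_assoc, AlgHom.map_adjugate,
      Matrix.adjugate_mul, Matrix.smul_mul, Matrix.one_mul, AlgHom.map_det]
  have hentry (i j : ι) : ∃ r : ℝ, (P'.adjugate * P) i j = P'.det * C r := by
    refine exists_eq_mul_C_of_aeval_mul_aeval_eq hx hxy hP' hV (c := (V' * V.adjugate) i j) ?_
    have hij := apply_mul_det_eq_of_mul_eq hadj i j
    rw [Matrix.smul_mul, ← AlgHom.map_det, ← AlgHom.map_adjugate, ← map_mul] at hij
    exact hij
  choose T hT using hentry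
  refine ⟨Matrix.of T, smul_right_injective _ hP'.ne_zero ?_⟩
  calc P'.det • P = P' * (P'.adjugate * P) := by
        rw [← Matrix.mul_assoc, Matrix.mul_adjugate, Matrix.smul_mul, Matrix.one_mul]
    _ = P' * (P'.det • C.mapMatrix (Matrix.of T)) := by
        congr 1
        ext1 i j
        exact hT i j
    _ = P'.det • (P' * C.mapMatrix (Matrix.of T)) := Matrix.mul_smul _ _ _

end PolynomialMatrix

section WienerHopf

variable {n : ℕ} {b p F p' F' : Matrix (Fin n) (Fin n) ℝ[X]}

lemma polyToRat_eq_mapMatrix (M : Matrix (Fin n) (Fin n) ℝ[X]) :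
    polyToRat M = (aeval (RatFunc.X : RatFunc ℝ)).mapMatrix M := by
  ext1 i j
  exact (RatFunc.aeval_X_left_eq_algebraMap (M i j)).symm

lemma invSub_eq_mapMatrix (M : Matrix (Fin n) (Fin n) ℝ[X]) :
    invSub M = (aeval (RatFunc.X : RatFunc ℝ)⁻¹).mapMatrix M := rfl

lemma det_evalMat (M : Matrix (Fin n) (Fin n) ℝ[X]) (z : ℂ) :
    (evalMat M z).det = aeval z M.det :=
  (AlgHom.map_det (aeval z) M).symm

lemma polyToRat_mul_sMat_mul_invSub (p F : Matrix (Fin n) (Fin n) ℝ[X]) (κ : ℤ) :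
    polyToRat p * sMat n (fun _ => κ) * invSub F = (RatFunc.X : RatFunc ℝ) ^ κ •
      ((aeval RatFunc.X).mapMatrix p * (aeval (RatFunc.X : RatFunc ℝ)⁻¹).mapMatrix F) := by
  rw [polyToRat_eq_mapMatrix, invSub_eq_mapMatrix, sMat, ← Matrix.smul_one_eq_diagonal,
    Matrix.mul_smul, Matrix.mul_one, Matrix.smul_mul]

lemma transcendental_ratFunc_X_inv {k : Type*} [Field k] :
    Transcendental k (RatFunc.X : RatFunc k)⁻¹ :=
  fun h => RatFunc.transcendental_X (IsAlgebraic.inv_iff.mp h)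

namespace IsWHF

lemma zeroFreeOnClosedDisc_det_left {κ : Fin n → ℤ} (h : IsWHF b p F κ) :
    ZeroFreeOnClosedDisc p.det :=
  fun z hz => det_evalMat p z ▸ h.p_noZero z hz

lemma zeroFreeOnClosedDisc_det_right {κ : Fin n → ℤ} (h : IsWHF b p F κ) :
    ZeroFreeOnClosedDisc F.det :=
  fun z hz => det_evalMat F z ▸ h.F_noZero z hz

lemma mapMatrix_eq_smul {κ : ℤ} (h : IsWHF b p F (fun _ => κ)) :
    (aeval (RatFunc.X : RatFunc ℝ)).mapMatrix b = (RatFunc.X : RatFunc ℝ) ^ κ •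
      ((aeval RatFunc.X).mapMatrix p * (aeval (RatFunc.X : RatFunc ℝ)⁻¹).mapMatrix F) := by
  rw [← polyToRat_eq_mapMatrix, h.eq, polyToRat_mul_sMat_mul_invSub]

lemma natDegree_right_le {κ : ℕ} (h : IsWHF b p F (fun _ => (κ : ℤ))) (i j : Fin n) :
    (F i j).natDegree ≤ κ := by
  have hX : (RatFunc.X : RatFunc ℝ) ≠ 0 := RatFunc.X_ne_zero
  have hp : pᵀ.det.coeff 0 ≠ 0 := by
    rw [Matrix.det_transpose]
    exact h.zeroFreeOnClosedDisc_det_left.coeff_zero_ne_zero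
  have hmul : (aeval (RatFunc.X : RatFunc ℝ)).mapMatrix p *
      (aeval (RatFunc.X : RatFunc ℝ)⁻¹).mapMatrix F =
        (RatFunc.X : RatFunc ℝ)⁻¹ ^ κ • (aeval (RatFunc.X : RatFunc ℝ)).mapMatrix b := by
    rw [h.mapMatrix_eq_smul, zpow_natCast, smul_smul, ← mul_pow, inv_mul_cancel₀ hX, one_pow,
      one_smul]
  refine natDegree_le_of_mapMatrix_mul_eq transcendental_ratFunc_X_inv (inv_mul_cancel₀ hX)
    (P := Fᵀ) (Q := bᵀ) hp ?_ j i
  simpa only [Matrix.transpose_mul, Matrix.transpose_smul, AlgHom.mapMatrix_apply,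
    Matrix.transpose_map] using congrArg Matrix.transpose hmul

lemma natDegree_left_le {κ q : ℕ} (h : IsWHF b p F (fun _ => (κ : ℤ))) (hκq : κ ≤ q)
    (hb : ∀ i j, (b i j).natDegree ≤ q) (i j : Fin n) : (p i j).natDegree ≤ q - κ := by
  have hX : (RatFunc.X : RatFunc ℝ) ≠ 0 := RatFunc.X_ne_zero
  have hreflect := mapMatrix_aeval_map_reflect (inv_mul_cancel₀ hX) hb
  refine natDegree_le_of_mapMatrix_mul_eq RatFunc.transcendental_X (mul_inv_cancel₀ hX)
    (V := F) (Q := b.map (reflect q)) h.zeroFreeOnClosedDisc_det_right.coeff_zero_ne_zero ?_ i j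
  apply smul_right_injective _ (pow_ne_zero κ hX)
  dsimp only
  rw [smul_smul, ← pow_add, Nat.add_sub_cancel' hκq, hreflect, smul_smul, ← mul_pow,
    mul_inv_cancel₀ hX, one_pow, one_smul, h.mapMatrix_eq_smul, zpow_natCast]

lemma exists_left_eq_mul_map_C {κ : ℤ} (h : IsWHF b p F (fun _ => κ))
    (h' : IsWHF b p' F' (fun _ => κ)) :
    ∃ T : Matrix (Fin n) (Fin n) ℝ, p = p' * C.mapMatrix T := by
  have hX : (RatFunc.X : RatFunc ℝ) ≠ 0 := RatFunc.X_ne_zero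
  apply exists_eq_mul_map_C_of_mapMatrix_mul_eq RatFunc.transcendental_X (mul_inv_cancel₀ hX)
    h'.zeroFreeOnClosedDisc_det_left h.zeroFreeOnClosedDisc_det_right (V' := F')
  apply smul_right_injective _ (zpow_ne_zero κ hX)
  exact h.mapMatrix_eq_smul.symm.trans h'.mapMatrix_eq_smul

lemma isUnit_map_coeff_zero_left {κ : Fin n → ℤ} (h : IsWHF b p F κ) :
    IsUnit (p.map fun r => r.coeff 0) := by
  rw [Matrix.isUnit_iff_isUnit_det, isUnit_iff_ne_zero]
  have hdet : p.det.coeff 0 = (p.map fun r => r.coeff 0).det :=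
    RingHom.map_det (constantCoeff (R := ℝ)) p
  exact hdet ▸ h.zeroFreeOnClosedDisc_det_left.coeff_zero_ne_zero

lemma left_eq_of_map_coeff_zero_eq {κ : ℤ} (h : IsWHF b p F (fun _ => κ))
    (h' : IsWHF b p' F' (fun _ => κ))
    (h0 : p.map (fun r => r.coeff 0) = p'.map (fun r => r.coeff 0)) : p = p' := by
  obtain ⟨T, rfl⟩ := h.exists_left_eq_mul_map_C h'
  have hT : T = 1 := by
    apply h'.isUnit_map_coeff_zero_left.mul_left_cancel
    rw [← map_coeff_zero_mul_map_C, h0, Matrix.mul_one]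
  rw [hT, map_one, Matrix.mul_one]

lemma right_eq {κ : ℤ} (h : IsWHF b p F (fun _ => κ)) (h' : IsWHF b p F' (fun _ => κ)) :
    F = F' := by
  have hX : (RatFunc.X : RatFunc ℝ) ≠ 0 := RatFunc.X_ne_zero
  have hp : IsUnit ((aeval (RatFunc.X : RatFunc ℝ)).mapMatrix p) := by
    rw [Matrix.isUnit_iff_isUnit_det, ← AlgHom.map_det, isUnit_iff_ne_zero]
    exact fun h0 => RatFunc.transcendental_X
      ⟨p.det, h.zeroFreeOnClosedDisc_det_left.ne_zero, h0⟩
  have hmap : (aeval (RatFunc.X : RatFunc ℝ)⁻¹).mapMatrix F =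
      (aeval (RatFunc.X : RatFunc ℝ)⁻¹).mapMatrix F' := by
    apply hp.mul_left_cancel
    apply smul_right_injective _ (zpow_ne_zero κ hX)
    exact h.mapMatrix_eq_smul.symm.trans h'.mapMatrix_eq_smul
  exact Matrix.map_injective (transcendental_iff_injective.mp transcendental_ratFunc_X_inv) hmap

lemma mul_map_C {κ : ℤ} (h : IsWHF b p F (fun _ => κ)) {S T : Matrix (Fin n) (Fin n) ℝ}
    (hST : S * T = 1) : IsWHF b (p * C.mapMatrix S) (C.mapMatrix T * F) (fun _ => κ) := by
  have hdet (z : ℂ) : aeval z (C.mapMatrix S).det * aeval z (C.mapMatrix T).det = 1 := by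
    rw [← map_mul, ← Matrix.det_mul, ← map_mul, hST, map_one, Matrix.det_one, map_one]
  have hcancel : (aeval (RatFunc.X : RatFunc ℝ)).mapMatrix (C.mapMatrix S) *
      (aeval (RatFunc.X : RatFunc ℝ)⁻¹).mapMatrix (C.mapMatrix T) = 1 := by
    rw [mapMatrix_aeval_map_C, mapMatrix_aeval_map_C, ← map_mul, hST, map_one]
  refine ⟨fun z hz => ?_, fun z hz => ?_, h.anti, ?_⟩
  · rw [det_evalMat, Matrix.det_mul, map_mul, ← det_evalMat p]
    exact mul_ne_zero (h.p_noZero z hz) (left_ne_zero_of_mul_eq_one (hdet z))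
  · rw [det_evalMat, Matrix.det_mul, map_mul, ← det_evalMat F]
    exact mul_ne_zero (right_ne_zero_of_mul_eq_one (hdet z)) (h.F_noZero z hz)
  · rw [polyToRat_mul_sMat_mul_invSub, polyToRat_eq_mapMatrix, h.mapMatrix_eq_smul, map_mul,
      map_mul, Matrix.mul_assoc, ← Matrix.mul_assoc _ _ ((aeval _).mapMatrix F), hcancel,
      Matrix.one_mul]

lemma exists_map_coeff_zero_left_eq_one {κ : ℤ} (h : IsWHF b p F (fun _ => κ)) :
    ∃ p' F' : Matrix (Fin n) (Fin n) ℝ[X], IsWHF b p' F' (fun _ => κ) ∧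
      p'.map (fun r => r.coeff 0) = (1 : Matrix (Fin n) (Fin n) ℝ) := by
  obtain ⟨P, hP⟩ := h.isUnit_map_coeff_zero_left
  refine ⟨_, _, h.mul_map_C P.inv_mul, ?_⟩
  rw [map_coeff_zero_mul_map_C, ← hP, P.mul_inv]

end IsWHF

end WienerHopf

/-- uniqueness of the WHF representative with p(0) = Iₙ when all partial
indices are equal to κ, together with the degree bounds on p and F. -/
theorem stmt0 {n q : ℕ} (b : Matrix (Fin n) (Fin n) (Polynomial ℝ))
    (hbdeg : ∀ i j, (b i j).degree ≤ (q : WithBot ℕ))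
    (hcirc : ∀ z : ℂ, ‖z‖ = 1 → (evalMat b z).det ≠ 0)
    (κ : ℕ) (hκq : κ ≤ q)
    (hexists : ∃ p F : Matrix (Fin n) (Fin n) (Polynomial ℝ),
      IsWHF b p F (fun _ => (κ : ℤ))) :
    (∃! pF : Matrix (Fin n) (Fin n) (Polynomial ℝ) × Matrix (Fin n) (Fin n) (Polynomial ℝ),
        IsWHF b pF.1 pF.2 (fun _ => (κ : ℤ)) ∧
        pF.1.map (fun r => r.coeff 0) = (1 : Matrix (Fin n) (Fin n) ℝ)) ∧
    (∀ p F : Matrix (Fin n) (Fin n) (Polynomial ℝ),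
      IsWHF b p F (fun _ => (κ : ℤ)) →
      p.map (fun r => r.coeff 0) = (1 : Matrix (Fin n) (Fin n) ℝ) →
      (∀ i j, (p i j).degree ≤ ((q - κ : ℕ) : WithBot ℕ)) ∧
      (∀ i j, (F i j).degree ≤ ((κ : ℕ) : WithBot ℕ))) := by
  refine ⟨?_, fun p F h _ => ⟨fun i j => ?_, fun i j => ?_⟩⟩
  · obtain ⟨p₀, F₀, h₀⟩ := hexists
    obtain ⟨p, F, h, hp⟩ := h₀.exists_map_coeff_zero_left_eq_one
    refine ⟨(p, F), ⟨h, hp⟩, ?_⟩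
    rintro ⟨p', F'⟩ ⟨h', hp'⟩
    obtain rfl : p' = p := h'.left_eq_of_map_coeff_zero_eq h (hp'.trans hp.symm)
    exact Prod.ext rfl (h'.right_eq h)
  · exact degree_le_of_natDegree_le
      (h.natDegree_left_le hκq (fun i j => natDegree_le_of_degree_le (hbdeg i j)) i j)
  · exact degree_le_of_natDegree_le (h.natDegree_right_le i j)
end

section
/- Let b(z) = p(z) s(z) f(z) be a Wiener–Hopf factorisation of an n×n real polynomial matrix b with f(z) = F(1/z) and f₀ = F(0) nonsingular. Then: (i) with f^{(1)}(z) := f(z) f₀^{−1}, one has b(z) = (p(z) s(z) f^{(1)}(z)) · f₀ as rational matrix functions, f^{(1)}(z) = F^{(1)}(1/z) with F^{(1)}(0) = I_n and det F^{(1)}(w) ≠ 0 for all complex |w| ≤ 1 (so p s f^{(1)} is again a WHF with the same partial indices). (ii) If in addition the partial indices are of type (κ,k) with 0 < k < n, the factorisation is the unique canonical representative (p₀ = [[I_k,0],[p_{0,21},I_{n−k}]], p_{1,[1:k,k+1:n]} = 0, last n−k rows of f_{κ+1} zero), and b₀ := b(0) is nonsingular, then with f^{(2)}(z) := f(z) b₀^{−1}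 one has b(z) = (p(z) s(z) f^{(2)}(z)) · b₀ and the stacked matrix whose first k rows are the first k rows of the coefficient f^{(2)}_{κ+1} and whose last n−k rows are the last n−k rows of the coefficient f^{(2)}_{κ} equals [[I_k, 0],[−p_{0,21}, I_{n−k}]]. -/
open Polynomial Matrix

/-!
Part (i) moves the constant matrix `f₀` from the right factor to the far right; `f₀` is nonsingular
because `det F(0) ≠ 0`. For part (ii), the partial indices are nonnegative and bound the degrees of
the rows of `F`, so `s(z) F(1/z)` is a polynomial matrix `G(z)`, obtained by reversing the
coefficients of each row of `F`, and `b = p G` already over the polynomials. Comparing constant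
terms gives `b₀ = p₀ G(0)`, hence `G(0) b₀⁻¹ = p₀⁻¹`. The rows of `G(0)` are the coefficients of `f`
of order `κ + 1` (first `k` rows) and `κ` (the others), and `p₀ - 1` squares to zero, so
`p₀⁻¹ = 1 - (p₀ - 1)`.
-/

section BlockUnitriangular

variable {m R : Type*} [Fintype m]

theorem mul_self_eq_zero_of_strictlyBlockTriangular [NonUnitalNonAssocSemiring R] (q : m → Prop)
    {L : Matrix m m R} (hL : ∀ i j, q i ∨ ¬ q j → L i j = 0) : L * L = 0 := by
  ext i j
  rw [Matrix.mul_apply]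
  refine Finset.sum_eq_zero fun l _ => ?_
  by_cases hl : q l
  · rw [hL l j (.inl hl), mul_zero]
  · rw [hL i l (.inr hl), zero_mul]

variable [DecidableEq m]

theorem inv_eq_one_sub_of_sub_one_mul_self [CommRing R] {A : Matrix m m R}
    (hA : (A - 1) * (A - 1) = 0) : A⁻¹ = 1 - (A - 1) := by
  refine Matrix.inv_eq_left_inv ?_
  calc (1 - (A - 1)) * A = 1 - (A - 1) * (A - 1) := by noncomm_ring
    _ = 1 := by rw [hA, sub_zero]

theorem inv_apply_of_blockUnitriangular [CommRing R] (q : m → Prop) [DecidablePred q]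
    {A : Matrix m m R} (hdiag : ∀ i j, (q i ↔ q j) → A i j = if i = j then 1 else 0)
    (hupper : ∀ i j, q i → ¬ q j → A i j = 0) (i j : m) :
    A⁻¹ i j = if i = j then 1 else if ¬ q i ∧ q j then -A i j else 0 := by
  have hsub : ∀ i j, q i ∨ ¬ q j → (A - 1) i j = 0 := by
    intro i j hij
    rw [Matrix.sub_apply, Matrix.one_apply, sub_eq_zero]
    by_cases hqij : q i ↔ q j
    · exact hdiag i j hqij
    · rw [hupper i j (by tauto) (by tauto), if_neg (by rintro rfl; exact hqij Iff.rfl)]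
  have hinv : A⁻¹ = 1 - (A - 1) :=
    inv_eq_one_sub_of_sub_one_mul_self (mul_self_eq_zero_of_strictlyBlockTriangular q hsub)
  rw [hinv, Matrix.sub_apply, Matrix.one_apply]
  split_ifs with hij hq
  · subst hij
    rw [Matrix.sub_apply, hdiag i i Iff.rfl, Matrix.one_apply_eq, if_pos rfl, sub_self, sub_zero]
  · rw [Matrix.sub_apply, Matrix.one_apply_ne hij, sub_zero, zero_sub]
  · rw [hsub i j (by tauto), sub_zero]

end BlockUnitriangular

section RowCoefficients

variable {l m n R : Type*}

/-- The matrix whose `i`-th row is the coefficient of order `N i` of the `i`-th row of `F`. With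
`N = 0` it is `F(0)`; for a right factor `F(1/z)` with partial indices `N` it is the stacked matrix
of normalised coefficients. -/
def rowCoeff [Semiring R] (N : m → ℕ) (F : Matrix m n R[X]) : Matrix m n R :=
  .of fun i j => (F i j).coeff (N i)

/-- The row-wise reversal of `F`, which is `diag(z^{N i}) F(1/z)` when the degree of the `i`-th row
of `F` is at most `N i`. -/
noncomputable def rowReflect [Semiring R] (N : m → ℕ) (F : Matrix m n R[X]) : Matrix m n R[X] :=
  .of fun i j => (F i j).reflect (N i)

theorem rowCoeff_mul_map_C [Fintype n] [Semiring R] (N : m → ℕ) (F : Matrix m n R[X])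
    (A : Matrix n l R) : rowCoeff N (F * A.map C) = rowCoeff N F * A := by
  ext i j
  simp [rowCoeff, Matrix.mul_apply, finsetSum_coeff]

theorem rowCoeff_zero_mul [Fintype n] [Semiring R] (A : Matrix m n R[X]) (B : Matrix n l R[X]) :
    rowCoeff 0 (A * B) = rowCoeff 0 A * rowCoeff 0 B :=
  Matrix.map_mul (f := constantCoeff)

theorem rowCoeff_zero_rowReflect [Semiring R] (N : m → ℕ) (F : Matrix m n R[X]) :
    rowCoeff 0 (rowReflect N F) = rowCoeff N F := by
  ext i j
  simp [rowCoeff, rowReflect, coeff_reflect, revAt_le]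

theorem rowCoeff_mul_inv_eq_inv [Fintype m] [DecidableEq m] [CommRing R] (N : m → ℕ)
    {b p F : Matrix m m R[X]} (h : b = p * rowReflect N F) (hb : IsUnit (rowCoeff 0 b).det) :
    rowCoeff N (F * (rowCoeff 0 b)⁻¹.map C) = (rowCoeff 0 p)⁻¹ := by
  have hconst : rowCoeff 0 b = rowCoeff 0 p * rowCoeff N F := by
    rw [h, rowCoeff_zero_mul, rowCoeff_zero_rowReflect]
  refine (Matrix.inv_eq_right_inv ?_).symm
  rw [rowCoeff_mul_map_C, ← Matrix.mul_assoc, ← hconst, Matrix.mul_nonsing_inv _ hb]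

end RowCoefficients

section Substitution

theorem algebraMap_reflect_eq_X_pow_mul_aeval_inv {K : Type*} [Field K] {f : K[X]} {N : ℕ}
    (hf : f.natDegree ≤ N) :
    algebraMap K[X] (RatFunc K) (f.reflect N) =
      RatFunc.X ^ N * aeval (RatFunc.X : RatFunc K)⁻¹ f := by
  have hX : (RatFunc.X : RatFunc K) ≠ 0 := RatFunc.X_ne_zero
  let _ : Invertible (RatFunc.X : RatFunc K)⁻¹ := invertibleOfNonzero (inv_ne_zero hX)
  have heval : aeval (RatFunc.X : RatFunc K) (f.reflect N) * (RatFunc.X : RatFunc K)⁻¹ ^ N =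
      aeval (RatFunc.X : RatFunc K)⁻¹ f := by
    simpa only [invOf_eq_inv, inv_inv, ← aeval_def] using
      eval₂_reflect_mul_pow (algebraMap K (RatFunc K)) (RatFunc.X : RatFunc K)⁻¹ N f hf
  rw [← heval, mul_left_comm, ← mul_pow, mul_inv_cancel₀ hX, one_pow, mul_one,
    ← RatFunc.algebraMap_X, aeval_algebraMap_apply, aeval_X_left_apply]

variable {n : ℕ}

theorem polyToRat_injective :
    Function.Injective (polyToRat : Matrix (Fin n) (Fin n) ℝ[X] → Matrix _ _ (RatFunc ℝ)) :=
  Matrix.map_injective (RatFunc.algebraMap_injective ℝ)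

theorem polyToRat_mul (A B : Matrix (Fin n) (Fin n) ℝ[X]) :
    polyToRat (A * B) = polyToRat A * polyToRat B :=
  Matrix.map_mul (f := algebraMap ℝ[X] (RatFunc ℝ))

theorem polyToRat_map_C (A : Matrix (Fin n) (Fin n) ℝ) :
    polyToRat (A.map C) = A.map (algebraMap ℝ (RatFunc ℝ)) :=
  Matrix.ext fun _ _ => (IsScalarTower.algebraMap_apply ℝ ℝ[X] (RatFunc ℝ) _).symm

theorem invSub_mul (A B : Matrix (Fin n) (Fin n) ℝ[X]) : invSub (A * B) = invSub A * invSub B :=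
  Matrix.map_mul (f := (aeval (RatFunc.X : RatFunc ℝ)⁻¹ : ℝ[X] →ₐ[ℝ] RatFunc ℝ))

theorem invSub_map_C (A : Matrix (Fin n) (Fin n) ℝ) :
    invSub (A.map C) = A.map (algebraMap ℝ (RatFunc ℝ)) :=
  Matrix.ext fun _ _ => aeval_C _ _

theorem evalMat_mul (A B : Matrix (Fin n) (Fin n) ℝ[X]) (z : ℂ) :
    evalMat (A * B) z = evalMat A z * evalMat B z :=
  Matrix.map_mul (f := (aeval z : ℝ[X] →ₐ[ℝ] ℂ))

theorem det_evalMat_map_C (A : Matrix (Fin n) (Fin n) ℝ) (z : ℂ) :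
    (evalMat (A.map C) z).det = A.det := by
  have hconst : evalMat (A.map C) z = (algebraMap ℝ ℂ).mapMatrix A :=
    Matrix.ext fun _ _ => aeval_C _ _
  rw [hconst, ← RingHom.map_det, Complex.coe_algebraMap]

theorem det_evalMat_zero (A : Matrix (Fin n) (Fin n) ℝ[X]) :
    (evalMat A 0).det = (rowCoeff 0 A).det := by
  have hzero : evalMat A 0 = (algebraMap ℝ ℂ).mapMatrix (rowCoeff 0 A) := by
    ext i j
    simp [evalMat, rowCoeff, aeval_def, eval₂_at_zero]
  rw [hzero, ← RingHom.map_det, Complex.coe_algebraMap]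

theorem invSub_mul_inv_map_C_mul {A : Matrix (Fin n) (Fin n) ℝ} (hA : IsUnit A.det)
    (F : Matrix (Fin n) (Fin n) ℝ[X]) :
    invSub (F * A⁻¹.map C) * A.map (algebraMap ℝ (RatFunc ℝ)) = invSub F := by
  rw [← invSub_map_C A, ← invSub_mul, Matrix.mul_assoc, ← Matrix.map_mul,
    Matrix.nonsing_inv_mul _ hA, Matrix.map_one _ C_0 C_1, Matrix.mul_one]

theorem polyToRat_rowReflect {N : Fin n → ℕ} {F : Matrix (Fin n) (Fin n) ℝ[X]}
    (hF : ∀ i j, (F i j).natDegree ≤ N i) :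
    polyToRat (rowReflect N F) = sMat n (fun i => N i) * invSub F := by
  ext i j
  rw [sMat, Matrix.diagonal_mul, zpow_natCast]
  exact algebraMap_reflect_eq_X_pow_mul_aeval_inv (hF i j)

end Substitution

namespace IsWHF

variable {n : ℕ} {b p F : Matrix (Fin n) (Fin n) ℝ[X]} {κ : Fin n → ℤ}

theorem isUnit_det_rowCoeff_zero (h : IsWHF b p F κ) : IsUnit (rowCoeff 0 F).det := by
  have hF : (evalMat F 0).det ≠ 0 := h.F_noZero 0 (by simp)
  rw [det_evalMat_zero] at hF
  exact isUnit_iff_ne_zero.mpr (Complex.ofReal_ne_zero.mp hF)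

theorem mul_map_C_s2 (h : IsWHF b p F κ) {A : Matrix (Fin n) (Fin n) ℝ} (hA : IsUnit A.det) :
    IsWHF (b * A.map C) p (F * A.map C) κ where
  p_noZero := h.p_noZero
  F_noZero w hw := by
    rw [evalMat_mul, Matrix.det_mul, det_evalMat_map_C]
    exact mul_ne_zero (h.F_noZero w hw) (Complex.ofReal_ne_zero.mpr hA.ne_zero)
  anti := h.anti
  eq := by
    rw [polyToRat_mul, h.eq, invSub_mul, polyToRat_map_C, invSub_map_C, Matrix.mul_assoc]

theorem eq_mul_inv_map_C_mul (h : IsWHF b p F κ) {A : Matrix (Fin n) (Fin n) ℝ}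
    (hA : IsUnit A.det) :
    polyToRat b =
      polyToRat p * sMat n κ * invSub (F * A⁻¹.map C) * A.map (algebraMap ℝ (RatFunc ℝ)) := by
  rw [Matrix.mul_assoc, invSub_mul_inv_map_C_mul hA, h.eq]

theorem eq_mul_rowReflect {N : Fin n → ℕ} (h : IsWHF b p F (fun i => N i))
    (hF : ∀ i j, (F i j).natDegree ≤ N i) : b = p * rowReflect N F :=
  polyToRat_injective <| by
    rw [polyToRat_mul, polyToRat_rowReflect hF, h.eq, Matrix.mul_assoc]

end IsWHF

section TypeIndices

/-- The partial indices `idx n κ k` as natural numbers. -/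
def natIdx (n κ k : ℕ) : Fin n → ℕ := fun i => if (i : ℕ) < k then κ + 1 else κ

theorem idx_eq_natCast_natIdx (n κ k : ℕ) : idx n κ k = fun i => (natIdx n κ k i : ℤ) := by
  funext i
  simp only [idx, natIdx]
  split_ifs <;> simp

theorem natDegree_le_natIdx {R l : Type*} [Semiring R] {n κ k : ℕ} {F : Matrix (Fin n) l R[X]}
    (hdeg : ∀ i j, (F i j).degree ≤ ((κ + 1 : ℕ) : WithBot ℕ))
    (hlast : ∀ (i : Fin n) j, k ≤ (i : ℕ) → (F i j).coeff (κ + 1) = 0) (i : Fin n) (j : l) :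
    (F i j).natDegree ≤ natIdx n κ k i := by
  have hle : (F i j).natDegree ≤ κ + 1 := natDegree_le_of_degree_le (hdeg i j)
  rw [natIdx]
  split_ifs with hi
  · exact hle
  · exact natDegree_le_pred hle (hlast i j (not_lt.mp hi))

theorem rowCoeff_natIdx_apply {R l : Type*} [Semiring R] {n : ℕ} (κ k : ℕ)
    (F : Matrix (Fin n) l R[X]) (i : Fin n) (j : l) :
    rowCoeff (natIdx n κ k) F i j =
      if (i : ℕ) < k then (F i j).coeff (κ + 1) else (F i j).coeff κ :=
  apply_ite (F i j).coeff _ _ _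

end TypeIndices

theorem stmt2_general {n : ℕ} (b p F : Matrix (Fin n) (Fin n) (Polynomial ℝ))
    (κfun : Fin n → ℤ) (hWHF : IsWHF b p F κfun) :
    (letI F0 : Matrix (Fin n) (Fin n) ℝ := F.map (fun r => r.coeff 0)
     letI F1 : Matrix (Fin n) (Fin n) (Polynomial ℝ) := F * (F0⁻¹).map Polynomial.C
     polyToRat b = (polyToRat p * sMat n κfun * invSub F1) *
        (F0.map (algebraMap ℝ (RatFunc ℝ))) ∧
     F1.map (fun r => r.coeff 0) = (1 : Matrix (Fin n) (Fin n) ℝ) ∧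
     (∀ w : ℂ, ‖w‖ ≤ 1 → (evalMat F1 w).det ≠ 0) ∧
     IsWHF (b * (F0⁻¹).map Polynomial.C) p F1 κfun) ∧
    (∀ κ k : ℕ, κfun = idx n κ k →
      (∀ i j : Fin n, ((i : ℕ) < k ↔ (j : ℕ) < k) →
        (p i j).coeff 0 = if i = j then (1 : ℝ) else 0) →
      (∀ i j : Fin n, (i : ℕ) < k → k ≤ (j : ℕ) → (p i j).coeff 0 = 0) →
      (∀ i j : Fin n, (F i j).degree ≤ ((κ + 1 : ℕ) : WithBot ℕ)) →
      (∀ i j : Fin n, k ≤ (i : ℕ) → (F i j).coeff (κ + 1) = 0) →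
      letI b0 : Matrix (Fin n) (Fin n) ℝ := b.map (fun r => r.coeff 0)
      b0.det ≠ 0 →
      letI F2 : Matrix (Fin n) (Fin n) (Polynomial ℝ) := F * (b0⁻¹).map Polynomial.C
      polyToRat b = (polyToRat p * sMat n κfun * invSub F2) *
        (b0.map (algebraMap ℝ (RatFunc ℝ))) ∧
      (∀ i j : Fin n,
        (if (i : ℕ) < k then (F2 i j).coeff (κ + 1) else (F2 i j).coeff κ) =
          if i = j then (1 : ℝ)
          else if k ≤ (i : ℕ) ∧ (j : ℕ) < k then -((p i j).coeff 0) else 0)) := by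
  have hF0 : IsUnit (rowCoeff 0 F).det := hWHF.isUnit_det_rowCoeff_zero
  have hWHF1 := hWHF.mul_map_C_s2 (Matrix.isUnit_nonsing_inv_det _ hF0)
  refine ⟨⟨hWHF.eq_mul_inv_map_C_mul hF0, ?_, hWHF1.F_noZero, hWHF1⟩, ?_⟩
  · exact (rowCoeff_mul_map_C 0 F _).trans (Matrix.mul_nonsing_inv _ hF0)
  · intro κ k hκ hdiag hupper hdeg hlast hdet
    have hb0 : IsUnit (rowCoeff 0 b).det := isUnit_iff_ne_zero.mpr hdet
    refine ⟨hWHF.eq_mul_inv_map_C_mul hb0, fun i j => ?_⟩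
    rw [hκ, idx_eq_natCast_natIdx] at hWHF
    have hbG := hWHF.eq_mul_rowReflect (natDegree_le_natIdx hdeg hlast)
    have hinv := inv_apply_of_blockUnitriangular (A := rowCoeff 0 p) (fun i : Fin n => (i : ℕ) < k)
      hdiag (fun i j hi hj => hupper i j hi (not_lt.mp hj)) i j
    simp only [← rowCoeff_mul_inv_eq_inv _ hbG hb0, rowCoeff_natIdx_apply, not_lt] at hinv
    exact hinv

/-- the two normalisations b = (p s f⁽¹⁾)·f₀ and b = (p s f⁽²⁾)·b₀ of a WHF. -/
theorem stmt2 {n : ℕ} (b p F : Matrix (Fin n) (Fin n) (Polynomial ℝ))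
    (κfun : Fin n → ℤ) (hWHF : IsWHF b p F κfun) :
    -- (i) with F⁽¹⁾ := F · f₀⁻¹ :
    (letI F0 : Matrix (Fin n) (Fin n) ℝ := F.map (fun r => r.coeff 0)
     letI F1 : Matrix (Fin n) (Fin n) (Polynomial ℝ) := F * (F0⁻¹).map Polynomial.C
     polyToRat b = (polyToRat p * sMat n κfun * invSub F1) *
        (F0.map (algebraMap ℝ (RatFunc ℝ))) ∧
     F1.map (fun r => r.coeff 0) = (1 : Matrix (Fin n) (Fin n) ℝ) ∧
     (∀ w : ℂ, ‖w‖ ≤ 1 → (evalMat F1 w).det ≠ 0) ∧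
     IsWHF (b * (F0⁻¹).map Polynomial.C) p F1 κfun) ∧
    -- (ii) canonical case with nonsingular b₀ and F⁽²⁾ := F · b₀⁻¹ :
    (∀ κ k : ℕ, 0 < k → k < n → κfun = idx n κ k →
      -- canonical representative conditions
      (∀ i j : Fin n, ((i : ℕ) < k ↔ (j : ℕ) < k) →
        (p i j).coeff 0 = if i = j then (1 : ℝ) else 0) →
      (∀ i j : Fin n, (i : ℕ) < k → k ≤ (j : ℕ) → (p i j).coeff 0 = 0) →
      (∀ i j : Fin n, (i : ℕ) < k → k ≤ (j : ℕ) → (p i j).coeff 1 = 0) →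
      (∀ i j : Fin n, (F i j).degree ≤ ((κ + 1 : ℕ) : WithBot ℕ)) →
      (∀ i j : Fin n, k ≤ (i : ℕ) → (F i j).coeff (κ + 1) = 0) →
      letI b0 : Matrix (Fin n) (Fin n) ℝ := b.map (fun r => r.coeff 0)
      b0.det ≠ 0 →
      letI F2 : Matrix (Fin n) (Fin n) (Polynomial ℝ) := F * (b0⁻¹).map Polynomial.C
      polyToRat b = (polyToRat p * sMat n κfun * invSub F2) *
        (b0.map (algebraMap ℝ (RatFunc ℝ))) ∧
      -- the stacked matrix of rows of f⁽²⁾_{κ+1} (first k) and f⁽²⁾_{κ} (last n-k)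
      (∀ i j : Fin n,
        (if (i : ℕ) < k then (F2 i j).coeff (κ + 1) else (F2 i j).coeff κ) =
          if i = j then (1 : ℝ)
          else if k ≤ (i : ℕ) ∧ (j : ℕ) < k then -((p i j).coeff 0) else 0)) := by
  have h := stmt2_general b p F κfun hWHF
  exact ⟨h.1, fun κ k _ _ hκ hdiag hupper _ => h.2 κ k hκ hdiag hupper⟩
end

section
/- Let Θ ⊆ ℝ^q be compact, U ⊆ Θ open (in ℝ^q) with θ₀ ∈ U, and let (Ω, 𝔉, P) be a probability space. For each T ∈ ℕ let L_T : Ω × Θ → ℝ be such that for each ω the map θ ↦ L_T(ω,θ) is twice continuously differentiable on U, with gradient ∇L_T and Hessian ∇²L_T. Assume: (i) the laws of the random vectors √T · ∇L_T(·, θ₀) converge weakly, as T → ∞, to the centered multivariate Gaussian distribution on ℝ^q with covariance matrix B (B positive semidefinite); (ii) there is a compact ball K ⊆ U of positive radius centered at θ₀ and a continuous non-random matrix-valued function A : K → ℝ^{q×q}, with A(θ₀) nonsingular, such that sup_{θ∈K} ‖∇²L_T(·,θ) − A(θ)‖ converges to 0 in probability; (iii) θ̂_T : Ω → Θ are measurable,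 satisfy ∇L_T(ω, θ̂_T(ω)) = 0 whenever θ̂_T(ω) ∈ U, and converge to θ₀ in probability. Then the laws of √T(θ̂_T − θ₀) converge weakly to the centered multivariate Gaussian distribution on ℝ^q with covariance matrix A(θ₀)^{−1} B A(θ₀)^{−1}. -/
open MeasureTheory Filter Matrix ProbabilityTheory
open scoped RealInnerProductSpace

/-- The Hessian matrix of f : ℝ^q → ℝ at x, as the matrix of the derivative of the
gradient in the standard basis. -/
noncomputable def hessMat {q : ℕ} (f : EuclideanSpace ℝ (Fin q) → ℝ)
    (x : EuclideanSpace ℝ (Fin q)) : Matrix (Fin q) (Fin q) ℝ :=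
  Matrix.of fun i j => (fderiv ℝ (fun y => gradient f y) x) (EuclideanSpace.single j 1) i

/-- ν is the centered Gaussian law on ℝ^q with covariance matrix S: every linear
functional ⟨l,·⟩ has law N(0, lᵀSl). -/
def IsCenteredGaussianLaw {q : ℕ} (ν : Measure (EuclideanSpace ℝ (Fin q)))
    (S : Matrix (Fin q) (Fin q) ℝ) : Prop :=
  ∀ l : EuclideanSpace ℝ (Fin q),
    ν.map (fun x => ⟪l, x⟫) =
      gaussianReal 0 (Real.toNNReal ((fun i => l i) ⬝ᵥ S.mulVec fun i => l i))

/-- Convergence in distribution (weak convergence of the laws). -/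
def TendstoInDistribution {Ω E : Type*} [MeasurableSpace Ω] [MeasurableSpace E]
    [TopologicalSpace E] (X : ℕ → Ω → E) (P : Measure Ω) (ν : Measure E) : Prop :=
  ∀ f : BoundedContinuousFunction E ℝ,
    Tendsto (fun T : ℕ => ∫ x, f x ∂(Measure.map (X T) P)) atTop (nhds (∫ x, f x ∂ν))

open Asymptotics Function
open scoped Topology

/-!
Say that an event depending on `n` and `ω` holds asymptotically almost surely if the probability of
its failure tends to `0`. These events form a filter along which `o_P` is just `o`, so the
estimator can be linearized as a deterministic sequence would be: by uniform convergence of the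
Hessians, `∇L(θ̂) - ∇L(θ₀) = A(θ₀) (θ̂ - θ₀) + o(θ̂ - θ₀)`, and since `∇L(θ̂) = 0` this says that
`θ̂ - θ₀ ~ -A(θ₀)⁻¹ ∇L(θ₀)`. Asymptotic equivalence survives multiplication by the rate `√T`, and
two asymptotically equivalent families have the same limit law, because a weakly convergent family
is bounded in probability. Finally a linear map `Q` turns the covariance `B` into `Q B Qᵀ`, and
`A(θ₀)` is symmetric, being a limit of Hessians.
-/

section InProbability

variable {ι Ω E : Type*} [MeasurableSpace Ω] {P : Measure Ω} {l : Filter ι}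

/-- The filter on `ι × Ω` of the events holding asymptotically almost surely, that is, with
`P`-probability of failure tending to `0` along `l`. Limits and `o(·)` along it are limits in
probability and `o_P(·)`. The events need not be measurable: failure is measured by the outer
measure `P`. -/
def aasFilter (P : Measure Ω) (l : Filter ι) : Filter (ι × Ω) :=
  Filter.comk (fun s => Tendsto (fun i => P (Prod.mk i ⁻¹' s)) l (𝓝 0))
    (by simpa using tendsto_const_nhds)
    (fun _ ht _ hst => tendsto_of_tendsto_of_tendsto_of_le_of_le tendsto_const_nhds ht
      (fun _ => zero_le) fun _ => measure_mono (Set.preimage_mono hst))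
    (fun _ hs _ ht => tendsto_of_tendsto_of_tendsto_of_le_of_le tendsto_const_nhds
      (add_zero (0 : ENNReal) ▸ hs.add ht) (fun _ => zero_le)
      fun _ => measure_union_le _ _)

lemma eventually_aasFilter {p : ι × Ω → Prop} :
    (∀ᶠ x in aasFilter P l, p x) ↔ Tendsto (fun i => P {ω | ¬ p (i, ω)}) l (𝓝 0) :=
  Iff.rfl

lemma tendsto_fst_aasFilter : Tendsto Prod.fst (aasFilter P l) l := fun s hs =>
  eventually_aasFilter.2 <| tendsto_const_nhds.congr' <| by
    filter_upwards [hs] with i hi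
    simp [hi]

instance neBot_aasFilter [NeZero P] [NeBot l] : NeBot (aasFilter P l) := by
  refine ⟨fun h => NeZero.ne (P Set.univ) ?_⟩
  have hfalse : ∀ᶠ _ in aasFilter P l, False := by simp [h]
  simpa [tendsto_const_nhds_iff] using eventually_aasFilter.1 hfalse

lemma tendsto_aasFilter_iff_tendstoInMeasure [PseudoEMetricSpace E] {X : ι → Ω → E} {c : E} :
    Tendsto (uncurry X) (aasFilter P l) (𝓝 c) ↔ TendstoInMeasure P X l fun _ => c := by
  simp only [Metric.nhds_basis_eball.tendsto_right_iff, eventually_aasFilter, TendstoInMeasure,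
    Metric.mem_eball, not_lt, uncurry]

/-- Boundedness in probability `X = O_P(1)` of a family of random vectors. -/
def BoundedInProbability [Norm E] (P : Measure Ω) (X : ι → Ω → E) (l : Filter ι) : Prop :=
  ∀ η : ENNReal, 0 < η → ∃ m : ℝ, 0 < m ∧ ∀ᶠ i in l, P {ω | m ≤ ‖X i ω‖} ≤ η

lemma BoundedInProbability.tendsto_zero_of_isLittleO {F : Type*} [Norm E] [SeminormedAddGroup F]
    {X : ι → Ω → E} {D : ι → Ω → F} (hX : BoundedInProbability P X l)
    (hD : uncurry D =o[aasFilter P l] uncurry X) : Tendsto (uncurry D) (aasFilter P l) (𝓝 0) := by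
  simp only [Metric.nhds_basis_ball.tendsto_right_iff, mem_ball_zero_iff]
  intro ε hε
  rw [eventually_aasFilter, ENNReal.tendsto_nhds_zero]
  intro η hη
  obtain ⟨m, hm, hXm⟩ := hX (η / 2) (ENNReal.half_pos hη.ne')
  have hDm := ENNReal.tendsto_nhds_zero.1
    (eventually_aasFilter.1 (hD.bound (by positivity : 0 < ε / m))) _ (ENNReal.half_pos hη.ne')
  filter_upwards [hXm, hDm] with i hXi hDi
  calc P {ω | ¬ ‖D i ω‖ < ε}
      ≤ P ({ω | m ≤ ‖X i ω‖} ∪ {ω | ¬ ‖D i ω‖ ≤ ε / m * ‖X i ω‖}) := by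
        refine measure_mono fun ω hω => ?_
        rw [Set.mem_union, or_iff_not_imp_right]
        refine fun hDX => le_of_not_gt (α := ℝ) fun hXm => hω ?_
        calc ‖D i ω‖ ≤ ε / m * ‖X i ω‖ := not_not.1 hDX
          _ < ε / m * m := by gcongr
          _ = ε := div_mul_cancel₀ ε hm.ne'
    _ ≤ η / 2 + η / 2 := (measure_union_le _ _).trans (add_le_add hXi hDi)
    _ = η := ENNReal.add_halves η

end InProbability

section WeakConvergence

variable {ι Ω Ω' E : Type*} [MeasurableSpace Ω] {P : Measure Ω} [IsProbabilityMeasure P]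
  [MeasurableSpace Ω'] {μ : Measure Ω'} [IsProbabilityMeasure μ] {l : Filter ι}
  [MeasurableSpace E]

lemma exists_measure_norm_ge_lt [SeminormedAddCommGroup E] [BorelSpace E] (ν : Measure E)
    [IsFiniteMeasure ν] {η : ENNReal} (hη : 0 < η) : ∃ m : ℝ, 0 < m ∧ ν {x | m ≤ ‖x‖} < η := by
  have hanti : Antitone fun n : ℕ => {x : E | (n : ℝ) + 1 ≤ ‖x‖} := fun m n hmn x hx =>
    (by gcongr : (m : ℝ) + 1 ≤ n + 1).trans hx
  have hempty : ⋂ n : ℕ, {x : E | (n : ℝ) + 1 ≤ ‖x‖} = ∅ :=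
    Set.eq_empty_of_forall_notMem fun x hx =>
      let ⟨n, hn⟩ := exists_nat_gt ‖x‖
      (hn.trans (lt_add_one _)).not_ge (Set.mem_iInter.1 hx n)
  have hlim := tendsto_measure_iInter_atTop (μ := ν)
    (fun n => (isClosed_le continuous_const continuous_norm).nullMeasurableSet) hanti
    ⟨0, measure_ne_top ν _⟩
  rw [hempty, measure_empty] at hlim
  obtain ⟨n, hn⟩ := (hlim.eventually_lt_const hη).exists
  exact ⟨n + 1, by positivity, hn⟩

lemma boundedInProbability_of_tendstoInDistribution [SeminormedAddCommGroup E] [BorelSpace E]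
    {X : ι → Ω → E} {Z : Ω' → E}
    (hX : MeasureTheory.TendstoInDistribution X l Z (fun _ => P) μ) :
    BoundedInProbability P X l := by
  intro η hη
  have := Measure.isProbabilityMeasure_map hX.aemeasurable_limit
  obtain ⟨m, hm, hZm⟩ := exists_measure_norm_ge_lt (μ.map Z) hη
  have hclosed : IsClosed {x : E | m ≤ ‖x‖} := isClosed_le continuous_const continuous_norm
  refine ⟨m, hm, ?_⟩
  have hlimsup := ProbabilityMeasure.limsup_measure_closed_le_of_tendsto hX.tendsto hclosed
  filter_upwards [eventually_lt_of_limsup_lt (hlimsup.trans_lt hZm)] with i hi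
  refine le_of_eq_of_le ?_ hi.le
  exact (Measure.map_apply_of_aemeasurable (hX.forall_aemeasurable i) hclosed.measurableSet).symm

lemma tendstoInDistribution_of_isEquivalent [NormedAddCommGroup E] [SecondCountableTopology E]
    [BorelSpace E] [l.IsCountablyGenerated] {X Y : ι → Ω → E} {Z : Ω' → E}
    (hY : MeasureTheory.TendstoInDistribution Y l Z (fun _ => P) μ)
    (hXY : uncurry X ~[aasFilter P l] uncurry Y) (hX : ∀ i, AEMeasurable (X i) P) :
    MeasureTheory.TendstoInDistribution X l Z (fun _ => P) μ :=
  tendstoInDistribution_of_tendstoInMeasure_sub X Z hY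
    (tendsto_aasFilter_iff_tendstoInMeasure.1 <|
      (boundedInProbability_of_tendstoInDistribution hY).tendsto_zero_of_isLittleO
        hXY.isLittleO) hX

end WeakConvergence

namespace TendstoInDistribution

variable {Ω E F : Type*} [MeasurableSpace Ω] {P : Measure Ω} [MeasurableSpace E]
  [TopologicalSpace E] {X Y : ℕ → Ω → E} {ν : Measure E}

lemma congr (hX : _root_.TendstoInDistribution X P ν) (hXY : X =ᶠ[atTop] Y) :
    _root_.TendstoInDistribution Y P ν := fun f =>
  (hX f).congr' (hXY.mono fun n hn => by rw [hn])

-- The law of a map that is not a.e.-measurable is `0`, and has no mass to converge to `1`.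
lemma eventually_aemeasurable [IsProbabilityMeasure ν]
    (hX : _root_.TendstoInDistribution X P ν) : ∀ᶠ n in atTop, AEMeasurable (X n) P := by
  have hmass := hX (BoundedContinuousFunction.const E 1)
  simp only [BoundedContinuousFunction.const_apply, integral_const, probReal_univ, smul_eq_mul,
    mul_one] at hmass
  filter_upwards [hmass.eventually_ne one_ne_zero] with n hn
  by_contra hc
  simp [Measure.map_of_not_aemeasurable hc] at hn

variable [OpensMeasurableSpace E] [IsProbabilityMeasure P]

lemma of_measureTheory {Ω' : Type*} [MeasurableSpace Ω'] {μ : Measure Ω'} [IsProbabilityMeasure μ]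
    {Z : Ω' → E} (hX : MeasureTheory.TendstoInDistribution X atTop Z (fun _ => P) μ) :
    _root_.TendstoInDistribution X P (μ.map Z) :=
  ProbabilityMeasure.tendsto_iff_forall_integral_tendsto.1 hX.tendsto

variable [IsProbabilityMeasure ν]

lemma exists_eventuallyEq (hX : _root_.TendstoInDistribution X P ν) :
    ∃ Y, X =ᶠ[atTop] Y ∧ MeasureTheory.TendstoInDistribution Y atTop id (fun _ => P) ν := by
  classical
  obtain ⟨e⟩ := nonempty_of_isProbabilityMeasure ν
  let Y n := if AEMeasurable (X n) P then X n else fun _ => e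
  have hXY : X =ᶠ[atTop] Y := hX.eventually_aemeasurable.mono fun n hn => (if_pos hn).symm
  have hY n : AEMeasurable (Y n) P := by
    by_cases hn : AEMeasurable (X n) P <;> simp [Y, hn]
  refine ⟨Y, hXY, hY, aemeasurable_id, ?_⟩
  refine ProbabilityMeasure.tendsto_iff_forall_integral_tendsto.2 fun f => ?_
  simpa using hX.congr hXY f

lemma continuous_comp [TopologicalSpace F] [MeasurableSpace F] [BorelSpace F]
    (hX : _root_.TendstoInDistribution X P ν) {g : E → F} (hg : Continuous g) :
    _root_.TendstoInDistribution (fun n => g ∘ X n) P (ν.map g) := by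
  obtain ⟨Y, hXY, hY⟩ := hX.exists_eventuallyEq
  refine (of_measureTheory (hY.continuous_comp hg)).congr ?_
  filter_upwards [hXY] with n hn
  rw [hn]

lemma of_isEquivalent {E : Type*} [NormedAddCommGroup E] [SecondCountableTopology E]
    [MeasurableSpace E] [BorelSpace E] {X Y : ℕ → Ω → E} {ν : Measure E} [IsProbabilityMeasure ν]
    (hY : _root_.TendstoInDistribution Y P ν)
    (hXY : uncurry X ~[aasFilter P atTop] uncurry Y) (hX : ∀ n, AEMeasurable (X n) P) :
    _root_.TendstoInDistribution X P ν := by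
  obtain ⟨Y', hYY', hY'⟩ := hY.exists_eventuallyEq
  have huncurry : uncurry Y =ᶠ[aasFilter P atTop] uncurry Y' :=
    (tendsto_fst_aasFilter.eventually hYY').mono fun p hp => congrFun hp p.2
  simpa using of_measureTheory <|
    tendstoInDistribution_of_isEquivalent hY' (hXY.congr_right huncurry) hX

end TendstoInDistribution

section Linearization

variable {α E F : Type*} [NormedAddCommGroup E] [NormedSpace ℝ E] [NormedAddCommGroup F]
  [NormedSpace ℝ F] {L : Filter α} {x₀ : E} {x : α → E} {G : α → E → F}
  {G' : α → E → E →L[ℝ] F} {M : E →L[ℝ] F}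

lemma isLittleO_sub_sub_of_tendsto_fderiv
    (hG : ∀ᶠ p in L ×ˢ 𝓝 x₀, HasFDerivAt (G p.1) (G' p.1 p.2) p.2)
    (hG' : Tendsto (fun p => G' p.1 p.2) (L ×ˢ 𝓝 x₀) (𝓝 M)) (hx : Tendsto x L (𝓝 x₀)) :
    (fun a => G a (x a) - G a x₀ - M (x a - x₀)) =o[L] fun a => x a - x₀ := by
  refine isLittleO_iff.2 fun ε hε => ?_
  obtain ⟨S, hS, V, hV, hSV⟩ := eventually_prod_iff.1 <|
    hG.and (hG'.eventually (Metric.closedBall_mem_nhds M hε))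
  obtain ⟨ρ, hρ, hball⟩ := Metric.eventually_nhds_iff_ball.1 hV
  filter_upwards [hS, hx (Metric.ball_mem_nhds x₀ hρ)] with a ha hxa
  exact (convex_ball x₀ ρ).norm_image_sub_le_of_norm_hasFDerivWithin_le'
    (fun y hy => (hSV ha (hball y hy)).1.hasFDerivWithinAt)
    (fun y hy => mem_closedBall_iff_norm.1 (hSV ha (hball y hy)).2)
    (Metric.mem_ball_self hρ) hxa

lemma isEquivalent_sub_of_eventually_eq_zero
    (hG : ∀ᶠ p in L ×ˢ 𝓝 x₀, HasFDerivAt (G p.1) (G' p.1 p.2) p.2)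
    (hG' : Tendsto (fun p => G' p.1 p.2) (L ×ˢ 𝓝 x₀) (𝓝 M)) {N : F →L[ℝ] E}
    (hNM : LeftInverse N M) (hx : Tendsto x L (𝓝 x₀)) (hzero : ∀ᶠ a in L, G a (x a) = 0) :
    (fun a => x a - x₀) ~[L] fun a => (-N) (G a x₀) := by
  refine IsEquivalent.symm ?_
  refine ((N.isBigO_comp _ L).trans_isLittleO
    (isLittleO_sub_sub_of_tendsto_fderiv hG hG' hx)).congr' ?_ EventuallyEq.rfl
  filter_upwards [hzero] with a ha
  rw [ha, map_sub, map_sub, hNM]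
  simp

end Linearization

section EstimatingEquation

variable {Ω E F : Type*} [MeasurableSpace Ω] {P : Measure Ω} [IsProbabilityMeasure P]
  [NormedAddCommGroup E] [NormedSpace ℝ E] [MeasurableSpace E] [BorelSpace E]
  [SecondCountableTopology E] [NormedAddCommGroup F] [NormedSpace ℝ F] [MeasurableSpace F]
  [BorelSpace F]

theorem tendstoInDistribution_of_estimatingEquation {G : ℕ → Ω → E → F}
    {G' : ℕ → Ω → E → E →L[ℝ] F} {M : E →L[ℝ] F} {N : F →L[ℝ] E} {x₀ : E} {xhat : ℕ → Ω → E}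
    {c : ℕ → ℝ} {ν : Measure F} [IsProbabilityMeasure ν]
    (hG : ∀ᶠ p in aasFilter P atTop ×ˢ 𝓝 x₀,
      HasFDerivAt (G p.1.1 p.1.2) (G' p.1.1 p.1.2 p.2) p.2)
    (hG' : Tendsto (fun p => G' p.1.1 p.1.2 p.2) (aasFilter P atTop ×ˢ 𝓝 x₀) (𝓝 M))
    (hNM : LeftInverse N M) (hxhat : ∀ n, AEMeasurable (xhat n) P)
    (hconsistent : Tendsto (uncurry xhat) (aasFilter P atTop) (𝓝 x₀))
    (hzero : ∀ᶠ p in aasFilter P atTop, G p.1 p.2 (xhat p.1 p.2) = 0)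
    (hscore : _root_.TendstoInDistribution (fun n ω => c n • G n ω x₀) P ν) :
    _root_.TendstoInDistribution (fun n ω => c n • (xhat n ω - x₀)) P (ν.map (-N)) := by
  have hequiv : (fun p : ℕ × Ω => xhat p.1 p.2 - x₀) ~[aasFilter P atTop]
      fun p => (-N) (G p.1 p.2 x₀) :=
    isEquivalent_sub_of_eventually_eq_zero (G := uncurry G) (G' := uncurry G') hG hG' hNM
      hconsistent hzero
  have := Measure.isProbabilityMeasure_map (μ := ν) (-N).continuous.aemeasurable
  refine (hscore.continuous_comp (-N).continuous).of_isEquivalent ?_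
    fun n => ((hxhat n).sub_const x₀).const_smul (c n)
  refine ((IsEquivalent.refl (u := fun p : ℕ × Ω => c p.1)).smul hequiv).congr_right ?_
  exact .of_forall fun p => (map_smul (-N) _ _).symm

end EstimatingEquation

lemma isSymm_of_tendsto {α n R : Type*} [TopologicalSpace R] [T2Space R] {l : Filter α} [l.NeBot]
    {S : α → Matrix n n R} {A : Matrix n n R} (hS : ∀ᶠ a in l, (S a).IsSymm)
    (hA : Tendsto S l (𝓝 A)) : A.IsSymm :=
  (isClosed_eq (by fun_prop) continuous_id : IsClosed {A : Matrix n n R | Aᵀ = A}).mem_of_tendsto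
    hA hS

section RandomMatrixFields

variable {ι Ω E m n : Type*} [MeasurableSpace Ω] {P : Measure Ω} {l : Filter ι}
  [TopologicalSpace E] {S : ι → Ω → E → Matrix m n ℝ} {A : E → Matrix m n ℝ} {x₀ : E} {K : Set E}

lemma tendsto_aasFilter_prod_nhds (hK : K ∈ 𝓝 x₀) (hA : ContinuousAt A x₀)
    (hS : ∀ δ : ℝ, 0 < δ → Tendsto
      (fun t => P {ω | ∃ x ∈ K, ∃ i j, δ < |S t ω x i j - A x i j|}) l (𝓝 0)) :
    Tendsto (fun p => S p.1.1 p.1.2 p.2) (aasFilter P l ×ˢ 𝓝 x₀) (𝓝 (A x₀)) := by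
  refine tendsto_pi_nhds.2 fun i => tendsto_pi_nhds.2 fun j => ?_
  have hAij : Tendsto (fun p : (ι × Ω) × E => A p.2 i j) (aasFilter P l ×ˢ 𝓝 x₀)
      (𝓝 (A x₀ i j)) :=
    ((continuous_apply_apply i j).continuousAt.comp hA).tendsto.comp tendsto_snd
  refine hAij.congr_dist (Metric.nhds_basis_closedBall.tendsto_right_iff.2 fun δ hδ => ?_)
  have hclose : ∀ᶠ p in aasFilter P l, ∀ x ∈ K, |S p.1 p.2 x i j - A x i j| ≤ δ :=
    eventually_aasFilter.2 <| tendsto_of_tendsto_of_tendsto_of_le_of_le tendsto_const_nhds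
      (hS δ hδ) (fun _ => zero_le) fun t => measure_mono fun ω hω => by
        obtain ⟨x, hx, hlt⟩ : ∃ x ∈ K, δ < |S t ω x i j - A x i j| := by simpa using hω
        exact ⟨x, hx, i, j, hlt⟩
  filter_upwards [hclose.prod_mk hK] with p hp
  simpa [Real.dist_eq, abs_sub_comm] using hp.1 p.2 hp.2

end RandomMatrixFields

section Hessian

variable {H : Type*} [NormedAddCommGroup H] [InnerProductSpace ℝ H] [CompleteSpace H]
  {f : H → ℝ} {x : H}

lemma differentiableAt_gradient_of_contDiffAt (hf : ContDiffAt ℝ 2 f x) :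
    DifferentiableAt ℝ (gradient f) x :=
  (InnerProductSpace.toDual ℝ H).symm.comp_differentiableAt_iff.2 <|
    (hf.fderiv_right (m := 1) (by norm_num)).differentiableAt (by norm_num)

lemma inner_fderiv_gradient (v w : H) :
    ⟪fderiv ℝ (gradient f) x v, w⟫ = fderiv ℝ (fderiv ℝ f) x v w := by
  have hcomp : gradient f = (InnerProductSpace.toDual ℝ H).symm ∘ fderiv ℝ f := rfl
  rw [hcomp, LinearIsometryEquiv.comp_fderiv]
  exact InnerProductSpace.toDual_symm_apply

variable {q : ℕ}

lemma toEuclideanCLM_hessMat (g : EuclideanSpace ℝ (Fin q) → ℝ) (y : EuclideanSpace ℝ (Fin q)) :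
    toEuclideanCLM (𝕜 := ℝ) (hessMat g y) = fderiv ℝ (gradient g) y := by
  refine ContinuousLinearMap.coe_injective <|
    (EuclideanSpace.basisFun (Fin q) ℝ).toBasis.ext fun j => ?_
  ext i
  simp [hessMat, ofLp_toEuclideanCLM]

lemma hessMat_apply (g : EuclideanSpace ℝ (Fin q) → ℝ)
    (y : EuclideanSpace ℝ (Fin q)) (i j : Fin q) :
    hessMat g y i j =
      fderiv ℝ (fderiv ℝ g) y (EuclideanSpace.single j 1) (EuclideanSpace.single i 1) := by
  rw [← inner_fderiv_gradient]
  simp [hessMat, EuclideanSpace.inner_single_right]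

lemma isSymm_hessMat {g : EuclideanSpace ℝ (Fin q) → ℝ} {y : EuclideanSpace ℝ (Fin q)}
    (hg : ContDiffAt ℝ 2 g y) : (hessMat g y).IsSymm := by
  ext i j
  rw [transpose_apply, hessMat_apply, hessMat_apply]
  exact (hg.isSymmSndFDerivAt (by simp)).eq _ _

end Hessian

section Gaussian

variable {p q : ℕ} {ν : Measure (EuclideanSpace ℝ (Fin q))} {S : Matrix (Fin q) (Fin q) ℝ}

lemma IsCenteredGaussianLaw.map_toEuclideanLin (hν : IsCenteredGaussianLaw ν S)
    (Q : Matrix (Fin p) (Fin q) ℝ) :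
    IsCenteredGaussianLaw (ν.map (toEuclideanLin Q)) (Q * S * Qᵀ) := by
  intro l
  have hQ : Continuous (toEuclideanLin Q) := LinearMap.continuous_of_finiteDimensional _
  have hadj : (fun x => ⟪l, x⟫) ∘ toEuclideanLin Q = fun x => ⟪toEuclideanLin Qᵀ l, x⟫ := by
    funext x
    rw [← conjTranspose_eq_transpose_of_trivial, toEuclideanLin_conjTranspose_eq_adjoint,
      LinearMap.adjoint_inner_left, Function.comp_apply]
  rw [Measure.map_map (by fun_prop) hQ.measurable, hadj, hν]
  have hquad : (Qᵀ *ᵥ l.ofLp) ⬝ᵥ S *ᵥ (Qᵀ *ᵥ l.ofLp) = l.ofLp ⬝ᵥ (Q * S * Qᵀ) *ᵥ l.ofLp := by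
    rw [← mulVec_mulVec, ← mulVec_mulVec, dotProduct_mulVec l.ofLp, mulVec_transpose]
  exact congrArg (fun v => gaussianReal 0 v.toNNReal) hquad

end Gaussian

lemma continuous_toEuclideanCLM {q : ℕ} : Continuous (toEuclideanCLM (n := Fin q) (𝕜 := ℝ)) :=
  LinearMap.continuous_of_finiteDimensional
    (toEuclideanCLM (n := Fin q) (𝕜 := ℝ)).toAlgEquiv.toLinearMap

section AsymptoticNormality

variable {q : ℕ} {Ω : Type*} [MeasurableSpace Ω] {P : Measure Ω} [IsProbabilityMeasure P]
  {f : ℕ → Ω → EuclideanSpace ℝ (Fin q) → ℝ} {K : Set (EuclideanSpace ℝ (Fin q))}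
  {θ₀ : EuclideanSpace ℝ (Fin q)} {A : EuclideanSpace ℝ (Fin q) → Matrix (Fin q) (Fin q) ℝ}

lemma isSymm_of_tendsto_measure_hessMat
    (hK : K ∈ 𝓝 θ₀) (hf : ∀ n ω, ContDiffOn ℝ 2 (f n ω) K) (hA : ContinuousAt A θ₀)
    (hHess : ∀ δ : ℝ, 0 < δ → Tendsto
      (fun n => P {ω | ∃ θ ∈ K, ∃ i j, δ < |hessMat (f n ω) θ i j - A θ i j|}) atTop (𝓝 0)) :
    (A θ₀).IsSymm := by
  refine isSymm_of_tendsto ?_ (tendsto_aasFilter_prod_nhds hK hA hHess)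
  filter_upwards [tendsto_snd.eventually (eventually_mem_nhds_iff.2 hK)] with p hp
  exact isSymm_hessMat ((hf p.1.1 p.1.2).contDiffAt hp)

theorem tendstoInDistribution_of_gradient_eq_zero
    (hK : K ∈ 𝓝 θ₀) (hf : ∀ n ω, ContDiffOn ℝ 2 (f n ω) K) (hA : ContinuousAt A θ₀)
    (hdet : (A θ₀).det ≠ 0)
    (hHess : ∀ δ : ℝ, 0 < δ → Tendsto
      (fun n => P {ω | ∃ θ ∈ K, ∃ i j, δ < |hessMat (f n ω) θ i j - A θ i j|}) atTop (𝓝 0))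
    {c : ℕ → ℝ} {ν : Measure (EuclideanSpace ℝ (Fin q))} [IsProbabilityMeasure ν]
    (hscore : _root_.TendstoInDistribution (fun n ω => c n • gradient (f n ω) θ₀) P ν)
    {θhat : ℕ → Ω → EuclideanSpace ℝ (Fin q)} (hθhat : ∀ n, AEMeasurable (θhat n) P)
    (hcrit : ∀ n ω, θhat n ω ∈ K → gradient (f n ω) (θhat n ω) = 0)
    (hconsistent : ∀ ε : ℝ, 0 < ε →
      Tendsto (fun n => P {ω | ε < ‖θhat n ω - θ₀‖}) atTop (𝓝 0)) :
    _root_.TendstoInDistribution (fun n ω => c n • (θhat n ω - θ₀)) P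
      (ν.map (toEuclideanLin (-(A θ₀)⁻¹))) := by
  have hθhat_tendsto : Tendsto (uncurry θhat) (aasFilter P atTop) (𝓝 θ₀) := by
    refine Metric.nhds_basis_closedBall.tendsto_right_iff.2 fun ε hε => ?_
    simpa [eventually_aasFilter, dist_eq_norm] using hconsistent ε hε
  have hderiv : ∀ᶠ p in aasFilter P atTop ×ˢ 𝓝 θ₀, HasFDerivAt (gradient (f p.1.1 p.1.2))
      (toEuclideanCLM (𝕜 := ℝ) (hessMat (f p.1.1 p.1.2) p.2)) p.2 := by
    filter_upwards [tendsto_snd.eventually (eventually_mem_nhds_iff.2 hK)] with p hp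
    rw [toEuclideanCLM_hessMat]
    exact (differentiableAt_gradient_of_contDiffAt ((hf _ _).contDiffAt hp)).hasFDerivAt
  have hHess_tendsto : Tendsto (fun p => toEuclideanCLM (𝕜 := ℝ) (hessMat (f p.1.1 p.1.2) p.2))
      (aasFilter P atTop ×ˢ 𝓝 θ₀) (𝓝 (toEuclideanCLM (𝕜 := ℝ) (A θ₀))) :=
    (continuous_toEuclideanCLM.tendsto _).comp (tendsto_aasFilter_prod_nhds hK hA hHess)
  have hinv : LeftInverse (toEuclideanCLM (𝕜 := ℝ) (A θ₀)⁻¹)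
      (toEuclideanCLM (𝕜 := ℝ) (A θ₀)) := by
    intro x
    rw [← mul_apply_eq_comp, ← map_mul, nonsing_inv_mul _ hdet.isUnit, map_one,
      one_apply_eq_self]
  have hlim := tendstoInDistribution_of_estimatingEquation (G := fun n ω => gradient (f n ω))
    (G' := fun n ω θ => toEuclideanCLM (𝕜 := ℝ) (hessMat (f n ω) θ))
    hderiv hHess_tendsto hinv hθhat hθhat_tendsto
    ((hθhat_tendsto.eventually hK).mono fun p => hcrit p.1 p.2) hscore
  rwa [← map_neg] at hlim

theorem stmt6_general
    (hK : K ∈ 𝓝 θ₀) (hf : ∀ n ω, ContDiffOn ℝ 2 (f n ω) K) (hA : ContinuousAt A θ₀)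
    (hdet : (A θ₀).det ≠ 0)
    (hHess : ∀ δ : ℝ, 0 < δ → Tendsto
      (fun n => P {ω | ∃ θ ∈ K, ∃ i j, δ < |hessMat (f n ω) θ i j - A θ i j|}) atTop (𝓝 0))
    {c : ℕ → ℝ} {ν : Measure (EuclideanSpace ℝ (Fin q))} [IsProbabilityMeasure ν]
    {B : Matrix (Fin q) (Fin q) ℝ} (hν : IsCenteredGaussianLaw ν B)
    (hscore : _root_.TendstoInDistribution (fun n ω => c n • gradient (f n ω) θ₀) P ν)
    {θhat : ℕ → Ω → EuclideanSpace ℝ (Fin q)} (hθhat : ∀ n, AEMeasurable (θhat n) P)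
    (hcrit : ∀ n ω, θhat n ω ∈ K → gradient (f n ω) (θhat n ω) = 0)
    (hconsistent : ∀ ε : ℝ, 0 < ε →
      Tendsto (fun n => P {ω | ε < ‖θhat n ω - θ₀‖}) atTop (𝓝 0)) :
    ∃ ν' : Measure (EuclideanSpace ℝ (Fin q)), IsProbabilityMeasure ν' ∧
      IsCenteredGaussianLaw ν' ((A θ₀)⁻¹ * B * (A θ₀)⁻¹) ∧
      _root_.TendstoInDistribution (fun n ω => c n • (θhat n ω - θ₀)) P ν' := by
  have hsymm : (A θ₀).IsSymm := isSymm_of_tendsto_measure_hessMat hK hf hA hHess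
  refine ⟨ν.map (toEuclideanLin (-(A θ₀)⁻¹)), Measure.isProbabilityMeasure_map ?_, ?_,
    tendstoInDistribution_of_gradient_eq_zero hK hf hA hdet hHess hscore hθhat hcrit hconsistent⟩
  · exact (LinearMap.continuous_of_finiteDimensional _).aemeasurable
  · simpa [transpose_nonsing_inv, hsymm.eq] using hν.map_toEuclideanLin (-(A θ₀)⁻¹)

end AsymptoticNormality

/-- asymptotic normality of √T(θ̂_T − θ₀). -/
theorem stmt6 {q : ℕ} (Θ U : Set (EuclideanSpace ℝ (Fin q)))
    (hΘc : IsCompact Θ) (hU : IsOpen U) (hUΘ : U ⊆ Θ)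
    (θ₀ : EuclideanSpace ℝ (Fin q)) (hθ₀ : θ₀ ∈ U)
    {Ω : Type*} [MeasurableSpace Ω] (P : Measure Ω) [IsProbabilityMeasure P]
    (LT : ℕ → Ω → EuclideanSpace ℝ (Fin q) → ℝ)
    (hC2 : ∀ T ω, ContDiffOn ℝ 2 (LT T ω) U)
    -- (i) CLT for the score
    (B : Matrix (Fin q) (Fin q) ℝ) (hB : B.PosSemidef)
    (hscore : ∃ νB : Measure (EuclideanSpace ℝ (Fin q)), IsProbabilityMeasure νB ∧
      IsCenteredGaussianLaw νB B ∧
      TendstoInDistribution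
        (fun T ω => (Real.sqrt T) • gradient (LT T ω) θ₀) P νB)
    -- (ii) ULLN for the Hessian on a compact ball K around θ₀
    (r : ℝ) (hr : 0 < r) (hKU : Metric.closedBall θ₀ r ⊆ U)
    (A : EuclideanSpace ℝ (Fin q) → Matrix (Fin q) (Fin q) ℝ)
    (hAcont : ContinuousOn A (Metric.closedBall θ₀ r))
    (hAnonsing : (A θ₀).det ≠ 0)
    (hHess : ∀ δ : ℝ, 0 < δ →
      Tendsto (fun T : ℕ =>
          P {ω | ∃ θ ∈ Metric.closedBall θ₀ r, ∃ i j : Fin q,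
            δ < |hessMat (LT T ω) θ i j - A θ i j|})
        atTop (nhds 0))
    -- (iii) consistent approximate critical points
    (θhat : ℕ → Ω → EuclideanSpace ℝ (Fin q))
    (hθhatMeas : ∀ T, Measurable (θhat T))
    (hθhatΘ : ∀ T ω, θhat T ω ∈ Θ)
    (hcrit : ∀ T ω, θhat T ω ∈ U → gradient (LT T ω) (θhat T ω) = 0)
    (hconsistent : ∀ ε : ℝ, 0 < ε →
      Tendsto (fun T : ℕ => P {ω | ε < ‖θhat T ω - θ₀‖}) atTop (nhds 0)) :
    ∃ ν : Measure (EuclideanSpace ℝ (Fin q)), IsProbabilityMeasure ν ∧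
      IsCenteredGaussianLaw ν ((A θ₀)⁻¹ * B * (A θ₀)⁻¹) ∧
      TendstoInDistribution
        (fun T ω => (Real.sqrt T) • (θhat T ω - θ₀)) P ν := by
  obtain ⟨νB, _, hνB, hlim⟩ := hscore
  have hK : Metric.closedBall θ₀ r ∈ 𝓝 θ₀ := Metric.closedBall_mem_nhds θ₀ hr
  exact stmt6_general hK (fun T ω => (hC2 T ω).mono hKU) (hAcont.continuousAt hK) hAnonsing hHess
    hνB hlim (fun T => (hθhatMeas T).aemeasurable) (fun T ω hθ => hcrit T ω (hKU hθ)) hconsistent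
end

section
/- Let M(z) be an n×n real polynomial matrix with det M(z) not identically zero. Then M(z) is row-reduced if and only if for every 1×n polynomial row vector w(z) = (w₁(z),…,wₙ(z)), the degree of v(z) = w(z)M(z) equals max_{1≤j≤n} ( deg w_j(z) + r_j ), where r_j is the j-th row degree of M and degrees obey the convention deg 0 = −∞ (so that the maximum ranges effectively over j with w_j ≠ 0). -/
open Polynomial Matrix

/-- The i-th row degree of a polynomial matrix (with deg 0 = ⊥ = -∞). -/
noncomputable def rowDegD {n : ℕ} (M : Matrix (Fin n) (Fin n) (Polynomial ℝ)) (i : Fin n) :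
    WithBot ℕ :=
  Finset.univ.sup fun j => (M i j).degree

/-- The i-th row degree of a polynomial matrix, as a natural number. -/
noncomputable def rowDegN {n : ℕ} (M : Matrix (Fin n) (Fin n) (Polynomial ℝ)) (i : Fin n) : ℕ :=
  Finset.univ.sup fun j => (M i j).natDegree

/-- The leading-row-coefficient matrix: entry (i,j) is the coefficient of z^{rᵢ} in M_{ij}. -/
noncomputable def leadRC {n : ℕ} (M : Matrix (Fin n) (Fin n) (Polynomial ℝ)) :
    Matrix (Fin n) (Fin n) ℝ :=
  Matrix.of fun i j => (M i j).coeff (rowDegN M i)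

/-- A polynomial matrix is row-reduced if its leading-row-coefficient matrix is nonsingular. -/
def RowReduced {n : ℕ} (M : Matrix (Fin n) (Fin n) (Polynomial ℝ)) : Prop :=
  (leadRC M).det ≠ 0

/-! Fix `d` bounding every `deg wⱼ + rⱼ`. The coefficient of `z ^ d` in `w M` is `a L`, where `L` is
the leading-row-coefficient matrix and `aⱼ` is the coefficient of `z ^ (d - rⱼ)` in `wⱼ`. When `d` is
the maximum, `a ≠ 0`, so there is no cancellation at `z ^ d` as soon as the rows of `L` are linearly
independent. Conversely, a relation `a L = 0` gives `wⱼ = aⱼ z ^ (d - rⱼ)`, for which the predicted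
degree is `d` but the coefficient of `z ^ d` in `w M` vanishes. -/

section PolynomialVector

variable {R ι : Type*} [Semiring R] [Fintype ι]

/-- The degree of a vector of polynomials, with value `⊥` at the zero vector; on the rows of a
matrix, these are the row degrees. -/
noncomputable def vecDegree (v : ι → R[X]) : WithBot ℕ :=
  Finset.univ.sup fun i => (v i).degree

/-- The degree of a vector of polynomials as a natural number, with junk value `0` at the zero
vector; it serves as the index of a coefficient. -/
noncomputable def vecNatDegree (v : ι → R[X]) : ℕ :=
  Finset.univ.sup fun i => (v i).natDegree

lemma degree_le_vecDegree (v : ι → R[X]) (i : ι) : (v i).degree ≤ vecDegree v :=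
  Finset.le_sup (f := fun i => (v i).degree) (Finset.mem_univ i)

lemma natDegree_le_vecNatDegree (v : ι → R[X]) (i : ι) : (v i).natDegree ≤ vecNatDegree v :=
  Finset.le_sup (f := fun i => (v i).natDegree) (Finset.mem_univ i)

lemma vecDegree_le_iff {v : ι → R[X]} {d : WithBot ℕ} :
    vecDegree v ≤ d ↔ ∀ i, (v i).degree ≤ d := by
  simp only [vecDegree, Finset.sup_le_iff, Finset.mem_univ, true_imp_iff]

lemma vecDegree_zero : vecDegree (0 : ι → R[X]) = ⊥ :=
  le_bot_iff.1 (vecDegree_le_iff.2 fun _ => degree_zero.le)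

lemma vecDegree_eq_vecNatDegree {v : ι → R[X]} (hv : v ≠ 0) :
    vecDegree v = vecNatDegree v := by
  obtain ⟨i, hi⟩ := Function.ne_iff.1 hv
  apply le_antisymm
  · exact vecDegree_le_iff.2 fun j =>
      degree_le_of_natDegree_le (natDegree_le_vecNatDegree v j)
  · obtain ⟨b, hb⟩ := WithBot.ne_bot_iff_exists.1
      (ne_bot_of_le_ne_bot (degree_ne_bot.2 hi) (degree_le_vecDegree v i))
    have hle : vecNatDegree v ≤ b := Finset.sup_le fun j _ =>
      natDegree_le_of_degree_le ((degree_le_vecDegree v j).trans hb.ge)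
    exact (Nat.cast_le.2 hle).trans hb.le

lemma vecDegree_eq_iff_of_le {v : ι → R[X]} {d : ℕ} (hv : vecDegree v ≤ d) :
    vecDegree v = d ↔ ∃ i, (v i).coeff d ≠ 0 := by
  constructor
  · contrapose!
    intro hcoeff
    refine ((Finset.sup_lt_iff (WithBot.bot_lt_coe d)).2 fun i _ => ?_).ne
    exact (vecDegree_le_iff.1 hv i).lt_of_ne fun hi => coeff_ne_zero_of_eq_degree hi (hcoeff i)
  · rintro ⟨i, hi⟩
    exact hv.antisymm ((le_degree_of_ne_zero hi).trans (degree_le_vecDegree v i))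

end PolynomialVector

section PredictedDegree

variable {R m n : Type*} [Semiring R] [Fintype n]

/-- The matrix of leading row coefficients of a rectangular polynomial matrix: its `(i, j)` entry is
the coefficient of `M i j` at the degree of row `i`. It generalizes `leadRC`. -/
noncomputable def leadingRowCoeff (M : Matrix m n R[X]) : Matrix m n R :=
  Matrix.of fun i j => (M i j).coeff (vecNatDegree (M i))

variable [Fintype m]

/-- The degree that the row vector `w ᵥ* M` has if no leading terms cancel. -/
noncomputable def predictedDegree (w : m → R[X]) (M : Matrix m n R[X]) : WithBot ℕ :=
  Finset.univ.sup fun j => (w j).degree + vecDegree (M j)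

lemma degree_add_vecDegree_le_predictedDegree (w : m → R[X]) (M : Matrix m n R[X]) (j : m) :
    (w j).degree + vecDegree (M j) ≤ predictedDegree w M :=
  Finset.le_sup (f := fun j => (w j).degree + vecDegree (M j)) (Finset.mem_univ j)

lemma vecDegree_vecMul_le (w : m → R[X]) (M : Matrix m n R[X]) :
    vecDegree (w ᵥ* M) ≤ predictedDegree w M := by
  refine vecDegree_le_iff.2 fun c => (degree_sum_le _ _).trans (Finset.sup_mono_fun fun j _ => ?_)
  calc (w j * M j c).degree ≤ (w j).degree + (M j c).degree := degree_mul_le _ _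
    _ ≤ (w j).degree + vecDegree (M j) := by gcongr; exact degree_le_vecDegree (M j) c

lemma coeff_vecMul_of_predictedDegree_le {w : m → R[X]} {M : Matrix m n R[X]} {d : ℕ}
    (h : predictedDegree w M ≤ d) (c : n) :
    ((w ᵥ* M) c).coeff d =
      ((fun j => (w j).coeff (d - vecNatDegree (M j))) ᵥ* leadingRowCoeff M) c := by
  simp only [vecMul, dotProduct, finsetSum_coeff, leadingRowCoeff, Matrix.of_apply]
  refine Finset.sum_congr rfl fun j _ => ?_
  by_cases hw : w j = 0
  · simp [hw]
  by_cases hM : M j = 0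
  · simp [hM]
  have hj : (w j).natDegree + vecNatDegree (M j) ≤ d := by
    have := (degree_add_vecDegree_le_predictedDegree w M j).trans h
    rw [degree_eq_natDegree hw, vecDegree_eq_vecNatDegree hM] at this
    exact_mod_cast this
  have hd : d - vecNatDegree (M j) + vecNatDegree (M j) = d := Nat.sub_add_cancel (by omega)
  conv_lhs => rw [← hd]
  exact coeff_mul_add_eq_of_natDegree_le (by omega) (natDegree_le_vecNatDegree (M j) c)

lemma vecDegree_vecMul_eq_iff {w : m → R[X]} {M : Matrix m n R[X]} {d : ℕ}
    (h : predictedDegree w M ≤ d) :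
    vecDegree (w ᵥ* M) = d ↔
      (fun j => (w j).coeff (d - vecNatDegree (M j))) ᵥ* leadingRowCoeff M ≠ 0 := by
  rw [vecDegree_eq_iff_of_le ((vecDegree_vecMul_le w M).trans h), Function.ne_iff]
  simp only [coeff_vecMul_of_predictedDegree_le h, Pi.zero_apply]

lemma exists_coeff_ne_zero_of_predictedDegree_eq {w : m → R[X]} {M : Matrix m n R[X]} {d : ℕ}
    (h : predictedDegree w M = d) : ∃ j, (w j).coeff (d - vecNatDegree (M j)) ≠ 0 := by
  obtain ⟨k, hk⟩ : ∃ k, (d : WithBot ℕ) ≤ (w k).degree + vecDegree (M k) := by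
    obtain ⟨k, -, hk⟩ := (Finset.le_sup_iff (WithBot.bot_lt_coe d)).1 h.ge
    exact ⟨k, hk⟩
  have hd : (w k).degree + vecDegree (M k) = d :=
    ((degree_add_vecDegree_le_predictedDegree w M k).trans h.le).antisymm hk
  have hw : w k ≠ 0 := by
    intro h0
    simp [h0] at hd
  have hM : M k ≠ 0 := by
    intro h0
    simp [h0, vecDegree_zero] at hd
  rw [degree_eq_natDegree hw, vecDegree_eq_vecNatDegree hM] at hd
  have hd' : (w k).natDegree + vecNatDegree (M k) = d := by exact_mod_cast hd
  refine ⟨k, ?_⟩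
  rwa [← hd', Nat.add_sub_cancel, coeff_natDegree, leadingCoeff_ne_zero]

lemma predictedDegree_C_mul_X_pow {M : Matrix m n R[X]} (hM : ∀ i, M i ≠ 0) {a : m → R}
    (ha : a ≠ 0) {d : ℕ} (hd : ∀ i, vecNatDegree (M i) ≤ d) :
    predictedDegree (fun j => C (a j) * X ^ (d - vecNatDegree (M j))) M = d := by
  obtain ⟨k, hk⟩ := Function.ne_iff.1 ha
  have hcancel (j : m) : ((d - vecNatDegree (M j) : ℕ) : WithBot ℕ) + vecDegree (M j) = d := by
    rw [vecDegree_eq_vecNatDegree (hM j)]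
    exact_mod_cast Nat.sub_add_cancel (hd j)
  apply le_antisymm
  · refine Finset.sup_le fun j _ => ?_
    grw [degree_C_mul_X_pow_le, hcancel]
  · refine le_trans ?_ (degree_add_vecDegree_le_predictedDegree _ M k)
    rw [degree_C_mul_X_pow _ hk, hcancel]

end PredictedDegree

section RowReduced

variable {R m n : Type*} [Ring R] [Fintype m] [Fintype n]

lemma vecDegree_vecMul_of_linearIndependent {M : Matrix m n R[X]}
    (hM : LinearIndependent R (leadingRowCoeff M).row) (w : m → R[X]) :
    vecDegree (w ᵥ* M) = predictedDegree w M := by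
  cases h : predictedDegree w M with
  | bot => exact le_bot_iff.1 ((vecDegree_vecMul_le w M).trans h.le)
  | coe d =>
    obtain ⟨j, hj⟩ := exists_coeff_ne_zero_of_predictedDegree_eq h
    refine (vecDegree_vecMul_eq_iff h.le).2 fun hzero => hj ?_
    exact congrFun (vecMul_injective_iff.2 hM (hzero.trans (zero_vecMul _).symm)) j

lemma linearIndependent_of_vecDegree_vecMul {M : Matrix m n R[X]} (hM : ∀ i, M i ≠ 0)
    (h : ∀ w : m → R[X], vecDegree (w ᵥ* M) = predictedDegree w M) :
    LinearIndependent R (leadingRowCoeff M).row := by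
  rw [Fintype.linearIndependent_iff]
  intro a hsum
  have haL : a ᵥ* leadingRowCoeff M = 0 := (vecMul_eq_sum a _).trans hsum
  by_contra! ha
  set d := Finset.univ.sup fun i => vecNatDegree (M i)
  have hd (i : m) : vecNatDegree (M i) ≤ d :=
    Finset.le_sup (f := fun i => vecNatDegree (M i)) (Finset.mem_univ i)
  have hpred := predictedDegree_C_mul_X_pow hM (Function.ne_iff.2 ha) hd
  apply (vecDegree_vecMul_eq_iff hpred.le).1 ((h _).trans hpred)
  simpa only [coeff_C_mul_X_pow, if_true] using haL

theorem stmt8_general (M : Matrix m n R[X]) (hM : ∀ i, M i ≠ 0) :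
    LinearIndependent R (leadingRowCoeff M).row ↔
      ∀ w : m → R[X], vecDegree (w ᵥ* M) = predictedDegree w M :=
  ⟨vecDegree_vecMul_of_linearIndependent, linearIndependent_of_vecDegree_vecMul hM⟩

end RowReduced

lemma rowReduced_iff_linearIndependent {n : ℕ} (M : Matrix (Fin n) (Fin n) ℝ[X]) :
    RowReduced M ↔ LinearIndependent ℝ (leadingRowCoeff M).row := by
  rw [linearIndependent_rows_iff_isUnit, isUnit_iff_isUnit_det, isUnit_iff_ne_zero]
  rfl

/-- predictable degree property. M is row-reduced iff for every polynomial
row vector w, deg (w M) = maxⱼ (deg wⱼ + rⱼ). -/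
theorem stmt8 {n : ℕ} (M : Matrix (Fin n) (Fin n) (Polynomial ℝ)) (hdet : M.det ≠ 0) :
    RowReduced M ↔
      ∀ w : Fin n → Polynomial ℝ,
        (Finset.univ.sup fun c : Fin n => (∑ j : Fin n, w j * M j c).degree) =
          Finset.univ.sup fun j : Fin n => (w j).degree + rowDegD M j :=
  (rowReduced_iff_linearIndependent M).trans <|
    stmt8_general M fun i hi => hdet (det_eq_zero_of_row_eq_zero i (congrFun hi))
end

section
/- Let b(z), p(z), g(z) be n×n real polynomial matrices with b(z) = p(z) g(z), where g is row-reduced with row degrees r₁,…,rₙ, and suppose that every entry of b has degree at most q. Then for all i, j, the (i,j) entry of p satisfies deg p_{ij}(z) ≤ q − r_j. -/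
open Polynomial Matrix

/-!
Fix a row `u` of `p`, let `r j` be the row degrees of `g`, and let `D` be the largest of the numbers
`deg (u j) + r j`. The coefficient of `z ^ D` in `u g` is `v L`, where `L` is the
leading-row-coefficient matrix of `g` and `v j` is the coefficient of `z ^ (D - r j)` in `u j`.
Since `v ≠ 0` and the rows of `L` are independent, `v L ≠ 0`: the top terms do not cancel, so some
entry of `u g` has degree at least `D`.
-/

section PredictableDegree

variable {R l m n : Type*} [Semiring R] [Fintype n]

/-- The degree of the `i`-th row of a rectangular polynomial matrix, with value `0` for a zero row;
it extends `rowDegN` to any coefficient semiring. -/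
def rowNatDegree (M : Matrix m n R[X]) (i : m) : ℕ :=
  Finset.univ.sup fun j => (M i j).natDegree

/-- The leading-row-coefficient matrix of a rectangular polynomial matrix;
it extends `leadRC` to any coefficient semiring. -/
def rowLeadingCoeff (M : Matrix m n R[X]) : Matrix m n R :=
  Matrix.of fun i j => (M i j).coeff (rowNatDegree M i)

theorem natDegree_le_rowNatDegree (M : Matrix m n R[X]) (i : m) (j : n) :
    (M i j).natDegree ≤ rowNatDegree M i :=
  Finset.le_sup (f := fun j => (M i j).natDegree) (Finset.mem_univ j)

theorem coeff_mul_of_degree_add_le {p q : R[X]} {s D : ℕ}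
    (hp : p.degree + s ≤ (D : WithBot ℕ)) (hq : q.natDegree ≤ s) :
    (p * q).coeff D = p.coeff (D - s) * q.coeff s := by
  -- For `p = 0` the hypothesis `hp` does not give `s ≤ D`, so `D - s` may truncate.
  obtain rfl | hp0 := eq_or_ne p 0
  · simp
  have hle : p.natDegree + s ≤ D := by
    rw [degree_eq_natDegree hp0] at hp
    exact_mod_cast hp
  have hcoeff := coeff_mul_add_eq_of_natDegree_le (Nat.le_sub_of_add_le hle) hq
  rwa [Nat.sub_add_cancel (le_of_add_le_right hle)] at hcoeff

theorem degree_add_lt_of_coeff_eq_zero {p : R[X]} {s D : ℕ}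
    (hp : p.degree + s ≤ (D : WithBot ℕ)) (hcoeff : p.coeff (D - s) = 0) :
    p.degree + s < (D : WithBot ℕ) := by
  refine hp.lt_of_ne fun htop => ?_
  have hp0 : p ≠ 0 := by
    rintro rfl
    simp at htop
  have hnat : p.natDegree + s = D := by
    rw [degree_eq_natDegree hp0] at htop
    exact_mod_cast htop
  rw [← hnat, Nat.add_sub_cancel] at hcoeff
  exact hp0 (leadingCoeff_eq_zero.mp hcoeff)

variable [Fintype m]

theorem coeff_dotProduct_of_degree_add_le {u v : m → R[X]} {s : m → ℕ} {D : ℕ}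
    (hu : ∀ j, (u j).degree + s j ≤ (D : WithBot ℕ)) (hv : ∀ j, (v j).natDegree ≤ s j) :
    (u ⬝ᵥ v).coeff D = (fun j => (u j).coeff (D - s j)) ⬝ᵥ fun j => (v j).coeff (s j) := by
  simp only [dotProduct, finsetSum_coeff]
  exact Finset.sum_congr rfl fun j _ => coeff_mul_of_degree_add_le (hu j) (hv j)

theorem degree_add_rowNatDegree_lt_of_coeff_vecMul_eq_zero {g : Matrix m n R[X]}
    (hg : LinearIndependent R (rowLeadingCoeff g).row) {u : m → R[X]} {D : ℕ}
    (hu : ∀ j, (u j).degree + rowNatDegree g j ≤ (D : WithBot ℕ))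
    (hD : ∀ k, ((u ᵥ* g) k).coeff D = 0) (j : m) :
    (u j).degree + rowNatDegree g j < (D : WithBot ℕ) := by
  have hker : (fun j => (u j).coeff (D - rowNatDegree g j)) ᵥ* rowLeadingCoeff g = 0 := by
    funext k
    exact (coeff_dotProduct_of_degree_add_le hu
      fun j => natDegree_le_rowNatDegree g j k).symm.trans (hD k)
  have hcoeff : (fun j => (u j).coeff (D - rowNatDegree g j)) = 0 :=
    Matrix.vecMul_injective_iff.mpr hg (hker.trans (Matrix.zero_vecMul _).symm)
  exact degree_add_lt_of_coeff_eq_zero (hu j) (congrFun hcoeff j)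

theorem sup_degree_add_rowNatDegree_le_sup_degree_vecMul {g : Matrix m n R[X]}
    (hg : LinearIndependent R (rowLeadingCoeff g).row) (u : m → R[X]) :
    (Finset.univ.sup fun j => (u j).degree + (rowNatDegree g j : WithBot ℕ)) ≤
      Finset.univ.sup fun k => ((u ᵥ* g) k).degree := by
  by_contra! hlt
  obtain ⟨D, hD⟩ := WithBot.ne_bot_iff_exists.mp hlt.ne_bot
  have hle (j : m) : (u j).degree + rowNatDegree g j ≤ (D : WithBot ℕ) :=
    (Finset.le_sup (f := fun j => (u j).degree + (rowNatDegree g j : WithBot ℕ))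
      (Finset.mem_univ j)).trans_eq hD.symm
  have hcoeff (k : n) : ((u ᵥ* g) k).coeff D = 0 := by
    refine coeff_eq_zero_of_degree_lt (lt_of_le_of_lt ?_ (hlt.trans_eq hD.symm))
    exact Finset.le_sup (f := fun k => ((u ᵥ* g) k).degree) (Finset.mem_univ k)
  refine hD.not_gt ((Finset.sup_lt_iff (WithBot.bot_lt_coe D)).mpr fun j _ => ?_)
  exact degree_add_rowNatDegree_lt_of_coeff_vecMul_eq_zero hg hle hcoeff j

theorem stmt9_general {p : Matrix l m R[X]} {g : Matrix m n R[X]} {q : WithBot ℕ}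
    (hg : LinearIndependent R (rowLeadingCoeff g).row)
    (hpg : ∀ i k, ((p * g) i k).degree ≤ q) (i : l) (j : m) :
    (p i j).degree + rowNatDegree g j ≤ q :=
  calc (p i j).degree + (rowNatDegree g j : WithBot ℕ)
    _ ≤ Finset.univ.sup fun j => (p i j).degree + (rowNatDegree g j : WithBot ℕ) :=
      Finset.le_sup (f := fun j => (p i j).degree + (rowNatDegree g j : WithBot ℕ))
        (Finset.mem_univ j)
    _ ≤ Finset.univ.sup fun k => ((p * g) i k).degree :=
      sup_degree_add_rowNatDegree_le_sup_degree_vecMul hg (p i)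
    _ ≤ q := Finset.sup_le fun k _ => hpg i k

end PredictableDegree

theorem rowDegD_le_rowDegN {n : ℕ} (M : Matrix (Fin n) (Fin n) ℝ[X]) (i : Fin n) :
    rowDegD M i ≤ (rowDegN M i : WithBot ℕ) :=
  Finset.sup_le fun j _ => natDegree_le_iff_degree_le.mp (natDegree_le_rowNatDegree M i j)

/-- if b = p g with g row-reduced with row degrees rⱼ and all entries of b
of degree at most q, then deg p_{ij} ≤ q - rⱼ (i.e. deg p_{ij} + rⱼ ≤ q). -/
theorem stmt9 {n q : ℕ} (b p g : Matrix (Fin n) (Fin n) (Polynomial ℝ))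
    (hdet : g.det ≠ 0) (hrr : RowReduced g) (hfac : b = p * g)
    (hbdeg : ∀ i j, (b i j).degree ≤ (q : WithBot ℕ)) :
    ∀ i j, (p i j).degree + rowDegD g j ≤ (q : WithBot ℕ) := by
  intro i j
  exact (add_le_add_right (rowDegD_le_rowDegN g j) _).trans <|
    stmt9_general (Matrix.linearIndependent_rows_of_det_ne_zero hrr) (hfac ▸ hbdeg) i j
end
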